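/- arXiv:1511.05321 — 4 statements merged into one kernel-verified Lean document; each statement's English description precedes it below -/
import Mathlib

section
/- Let p, q ∈ ℂ, let μ ∈ ℂ with Re μ > 0, and let n ≥ 0 be an integer. Then ∑_{m∈ℤ} (m+p)ⁿ exp(−(π/μ)(m+p)² + 2πi(m+p)q) = e^{2πipq} · ∑_{j=0}^{⌊n/2⌋} [ (−i)^{n−2j} μ^{n+1/2−j} n! / ( (2π)^j (n−2j)! (2j)!! ) ] · ∑_{m∈ℤ} (m−q)^{n−2j} exp(−πμ(m−q)² + 2πip(m−q)), where all the series converge absolutely. -/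
noncomputable section

/-- The theta function with characteristics `θ[p,q](iμ)`. -/
def theta (p q μ : ℂ) : ℂ :=
  ∑' m : ℤ, Complex.exp (-(Real.pi : ℂ) * ((m : ℂ) + p) ^ 2 * μ +
    2 * (Real.pi : ℂ) * Complex.I * ((m : ℂ) + p) * q)

/-- The characteristic derivative `∂qθ[p,q](iμ)`. -/
def thetaQ (p q μ : ℂ) : ℂ :=
  2 * (Real.pi : ℂ) * Complex.I *
    ∑' m : ℤ, ((m : ℂ) + p) * Complex.exp (-(Real.pi : ℂ) * ((m : ℂ) + p) ^ 2 * μ +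
      2 * (Real.pi : ℂ) * Complex.I * ((m : ℂ) + p) * q)

/-- The n-th μ-derivative `∂μⁿθ[p,q](iμ)`, given by its absolutely convergent series. -/
def thetaD (n : ℕ) (p q μ : ℂ) : ℂ :=
  (-(Real.pi : ℂ)) ^ n *
    ∑' m : ℤ, ((m : ℂ) + p) ^ (2 * n) *
      Complex.exp (-(Real.pi : ℂ) * ((m : ℂ) + p) ^ 2 * μ +
        2 * (Real.pi : ℂ) * Complex.I * ((m : ℂ) + p) * q)

/-- The n-th μ-derivative `∂μⁿ∂qθ[p,q](iμ)`, given by its absolutely convergent series. -/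
def thetaQD (n : ℕ) (p q μ : ℂ) : ℂ :=
  2 * Complex.I * (-1 : ℂ) ^ n * (Real.pi : ℂ) ^ (n + 1) *
    ∑' m : ℤ, ((m : ℂ) + p) ^ (2 * n + 1) *
      Complex.exp (-(Real.pi : ℂ) * ((m : ℂ) + p) ^ 2 * μ +
        2 * (Real.pi : ℂ) * Complex.I * ((m : ℂ) + p) * q)

/-- The constant `C(j|n) = (−i)ⁿ n! / (2ʲ (n−2j)! (2j)!!)` with `(2j)!! = 2ʲ j!`. -/
def Ccoef (j n : ℕ) : ℂ :=
  (-Complex.I) ^ n * (n.factorial : ℂ) /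
    ((2 : ℂ) ^ j * ((n - 2 * j).factorial : ℂ) * ((2 : ℂ) ^ j * (j.factorial : ℂ)))

/-- `w₁[p,q](iμ)` of the two-parametric family. -/
def w1 (p q μ : ℂ) : ℂ :=
  -(Complex.I / 2) * theta 0 0 μ * theta 0 (1 / 2) μ * thetaQ p (q + 1 / 2) μ /
    (Complex.exp ((Real.pi : ℂ) * Complex.I * p) * theta p q μ)

/-- `w₂[p,q](iμ)` of the two-parametric family. -/
def w2 (p q μ : ℂ) : ℂ :=
  (Complex.I / 2) * theta (1 / 2) 0 μ * theta 0 (1 / 2) μ *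
    thetaQ (p + 1 / 2) (q + 1 / 2) μ /
    (Complex.exp ((Real.pi : ℂ) * Complex.I * p) * theta p q μ)

/-- `w₃[p,q](iμ)` of the two-parametric family. -/
def w3 (p q μ : ℂ) : ℂ :=
  -(1 / 2 : ℂ) * theta (1 / 2) 0 μ * theta 0 0 μ * thetaQ (p + 1 / 2) q μ / theta p q μ

/-- The conformal factor `F[p,q](iμ)` of the two-parametric family. -/
def Ftwo (Λ p q μ : ℂ) : ℂ :=
  (2 / ((Real.pi : ℂ) * Λ)) * (theta p q μ / thetaQ p q μ) ^ 2

/-- `w₁[q₀](iμ)` of the one-parametric family. -/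
def v1 (q0 μ : ℂ) : ℂ := 1 / (μ + q0) + 2 * thetaD 1 (1 / 2) 0 μ / theta (1 / 2) 0 μ

/-- `w₂[q₀](iμ)` of the one-parametric family. -/
def v2 (q0 μ : ℂ) : ℂ := 1 / (μ + q0) + 2 * thetaD 1 0 0 μ / theta 0 0 μ

/-- `w₃[q₀](iμ)` of the one-parametric family. -/
def v3 (q0 μ : ℂ) : ℂ := 1 / (μ + q0) + 2 * thetaD 1 0 (1 / 2) μ / theta 0 (1 / 2) μ

/-- The conformal factor `F[q₀](iμ) = C(μ+q₀)²` of the one-parametric family. -/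
def Fone (C q0 μ : ℂ) : ℂ := C * (μ + q0) ^ 2

/-- The Seeley–de Witt coefficient `ã₀[p,q](iμ)` of the two-parametric family. -/
def a0two (Λ p q μ : ℂ) : ℂ :=
  4 * Ftwo Λ p q μ ^ 2 * w1 p q μ * w2 p q μ * w3 p q μ

/-- The Seeley–de Witt coefficient `ã₀[q₀](iμ)` of the one-parametric family. -/
def a0one (C q0 μ : ℂ) : ℂ :=
  4 * Fone C q0 μ ^ 2 * v1 q0 μ * v2 q0 μ * v3 q0 μ

/-- The Seeley–de Witt coefficient `ã₂[p,q](iμ)` of the two-parametric family. -/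
def a2two (Λ p q μ : ℂ) : ℂ :=
  -(Ftwo Λ p q μ / 3) * (w1 p q μ ^ 2 + w2 p q μ ^ 2 + w3 p q μ ^ 2) +
  (Ftwo Λ p q μ / 6) *
    ((w1 p q μ ^ 2 * w2 p q μ ^ 2 - deriv (w3 p q) μ ^ 2) / w3 p q μ ^ 2 +
     (w1 p q μ ^ 2 * w3 p q μ ^ 2 - deriv (w2 p q) μ ^ 2) / w2 p q μ ^ 2 +
     (w2 p q μ ^ 2 * w3 p q μ ^ 2 - deriv (w1 p q) μ ^ 2) / w1 p q μ ^ 2) -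
  (Ftwo Λ p q μ / 3) *
    (deriv (w1 p q) μ * deriv (w2 p q) μ / (w1 p q μ * w2 p q μ) +
     deriv (w1 p q) μ * deriv (w3 p q) μ / (w1 p q μ * w3 p q μ) +
     deriv (w2 p q) μ * deriv (w3 p q) μ / (w2 p q μ * w3 p q μ)) +
  (Ftwo Λ p q μ / 3) *
    (iteratedDeriv 2 (w1 p q) μ / w1 p q μ + iteratedDeriv 2 (w2 p q) μ / w2 p q μ +
     iteratedDeriv 2 (w3 p q) μ / w3 p q μ) -
  deriv (Ftwo Λ p q) μ ^ 2 / (2 * Ftwo Λ p q μ) + iteratedDeriv 2 (Ftwo Λ p q) μ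


/-- The generic Gaussian term. -/
def gT (k : ℕ) (a z c : ℂ) (m : ℤ) : ℂ :=
  ((m : ℂ) + z) ^ k * Complex.exp (-(Real.pi : ℂ) * a * ((m : ℂ) + z) ^ 2 + c * ((m : ℂ) + z))

lemma gT_bound (k : ℕ) (a : ℂ) (ha : 0 < a.re) (R : ℝ) (hR : 0 ≤ R) :
    ∃ u : ℤ → ℝ, Summable u ∧ ∀ m z c, ‖z‖ ≤ R → ‖c‖ ≤ R → ‖gT k a z c m‖ ≤ u m := by
  set S : ℝ := (1 + 2 * Real.pi * ‖a‖ * R + R) / (2 * Real.pi) with hS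
  have hpi := Real.pi_pos
  have hSe : Real.pi * (2 * S) = 1 + 2 * Real.pi * ‖a‖ * R + R := by
    rw [hS]; field_simp
  have h0 := summable_pow_mul_jacobiTheta₂_term_bound S ha 0
  refine ⟨_, h0.mul_left ((k.factorial : ℝ) * Real.exp (R + Real.pi * ‖a‖ * R ^ 2 + R ^ 2)), ?_⟩
  intro m z c hz hc
  have hm : ‖(m : ℂ)‖ = |(m : ℝ)| := by simp
  have hmz : ‖(m : ℂ) + z‖ ≤ |(m : ℝ)| + R := by
    refine (norm_add_le _ _).trans ?_
    rw [hm]; gcongr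
  have hpow : ‖(m : ℂ) + z‖ ^ k ≤ k.factorial * Real.exp (|(m : ℝ)| + R) := by
    have h1 : ‖(m : ℂ) + z‖ ^ k ≤ (|(m : ℝ)| + R) ^ k := by gcongr
    have h2 := Real.pow_div_factorial_le_exp (x := |(m : ℝ)| + R) (by positivity) k
    rw [div_le_iff₀ (by positivity)] at h2
    linarith
  have hre : (-(Real.pi : ℂ) * a * ((m : ℂ) + z) ^ 2 + c * ((m : ℂ) + z)).re ≤
      -Real.pi * a.re * m ^ 2 + (2 * Real.pi * ‖a‖ * R + R) * |(m : ℝ)|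
        + Real.pi * ‖a‖ * R ^ 2 + R ^ 2 := by
    have e : (-(Real.pi : ℂ) * a * ((m : ℂ) + z) ^ 2 + c * ((m : ℂ) + z)) =
      (((-Real.pi * m ^ 2 : ℝ) : ℂ)) * a + (-(Real.pi : ℂ) * a * (2 * m * z + z ^ 2)
        + c * (m + z)) := by push_cast; ring
    rw [e, Complex.add_re, Complex.re_ofReal_mul]
    have h3 : (-(Real.pi : ℂ) * a * (2 * m * z + z ^ 2) + c * (m + z)).re ≤
        Real.pi * ‖a‖ * (2 * |(m : ℝ)| * R + R ^ 2) + R * (|(m : ℝ)| + R) := by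
      refine (Complex.re_le_norm _).trans ((norm_add_le _ _).trans ?_)
      rw [norm_mul, norm_mul, norm_mul, norm_neg, Complex.norm_real, Real.norm_of_nonneg hpi.le]
      gcongr
      refine (norm_add_le _ _).trans ?_
      rw [norm_mul, norm_mul, norm_pow, hm]
      simp only [Complex.norm_ofNat]
      gcongr
    nlinarith [h3]
  rw [gT, norm_mul, norm_pow, Complex.norm_exp]
  calc _ ≤ (k.factorial * Real.exp (|(m : ℝ)| + R)) * Real.exp (-Real.pi * a.re * m ^ 2 +
        (2 * Real.pi * ‖a‖ * R + R) * |(m : ℝ)| + Real.pi * ‖a‖ * R ^ 2 + R ^ 2) := by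
        gcongr
    _ = _ := by
        rw [pow_zero, one_mul, mul_assoc (k.factorial : ℝ), mul_assoc (k.factorial : ℝ),
          ← Real.exp_add, ← Real.exp_add]
        congr 2
        have : -Real.pi * (a.re * (m : ℝ) ^ 2 - 2 * S * |(m : ℝ)|) =
          -Real.pi * a.re * (m : ℝ) ^ 2 + (Real.pi * (2 * S)) * |(m : ℝ)| := by ring
        push_cast
        rw [this, hSe]; ring

lemma gT_summable (k : ℕ) (a : ℂ) (ha : 0 < a.re) (z c : ℂ) : Summable (gT k a z c) := by
  obtain ⟨u, hu, h⟩ := gT_bound k a ha (max ‖z‖ ‖c‖) (by positivity)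
  exact Summable.of_norm_bounded hu fun m => h m z c (le_max_left _ _) (le_max_right _ _)

lemma hasDerivAt_tsum_aux {F F' : ℤ → ℂ → ℂ} (hF : ∀ m w, HasDerivAt (F m) (F' m w) w)
    (hb : ∀ R : ℝ, 0 ≤ R → ∃ u : ℤ → ℝ, Summable u ∧ ∀ m w, ‖w‖ ≤ R → ‖F m w‖ ≤ u m) (z : ℂ) :
    HasDerivAt (fun w => ∑' m, F m w) (∑' m, F' m z) z := by
  obtain ⟨u, hu, h⟩ := hb (‖z‖ + 1) (by positivity)
  have hz : z ∈ Metric.ball (0 : ℂ) (‖z‖ + 1) := by simp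
  have hd : ∀ m, DifferentiableOn ℂ (F m) (Metric.ball (0 : ℂ) (‖z‖ + 1)) :=
    fun m w _ => (hF m w).differentiableAt.differentiableWithinAt
  have hle : ∀ (m : ℤ) (w : ℂ), w ∈ Metric.ball (0 : ℂ) (‖z‖ + 1) → ‖F m w‖ ≤ u m := by
    intro m w hw
    exact h m w (by simpa using (mem_ball_zero_iff.mp hw).le)
  have h1 := Complex.differentiableOn_tsum_of_summable_norm hu hd Metric.isOpen_ball hle
  have h2 := Complex.hasSum_deriv_of_summable_norm hu hd Metric.isOpen_ball hle hz
  have h3 : (fun m => deriv (F m) z) = fun m => F' m z := funext fun m => (hF m z).deriv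
  rw [h3] at h2
  rw [h2.tsum_eq]
  exact (h1.differentiableAt (Metric.isOpen_ball.mem_nhds hz)).hasDerivAt

/-- Left-hand series. -/
def sA (p μ : ℂ) (n : ℕ) (q : ℂ) : ℂ := ∑' m : ℤ, gT n (1 / μ) p (2 * Real.pi * Complex.I * q) m

/-- Right-hand series. -/
def sB (p μ : ℂ) (k : ℕ) (q : ℂ) : ℂ :=
  Complex.exp (2 * Real.pi * Complex.I * p * q) *
    ∑' m : ℤ, gT k μ (-q) (2 * Real.pi * Complex.I * p) m

lemma inv_re_pos {μ : ℂ} (hμ : 0 < μ.re) : 0 < (1 / μ).re := by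
  have h0 : μ ≠ 0 := by rintro rfl; simp at hμ
  rw [one_div, Complex.inv_re]
  exact div_pos hμ (Complex.normSq_pos.mpr h0)

lemma sA_deriv (p μ : ℂ) (hμ : 0 < μ.re) (n : ℕ) (q : ℂ) :
    HasDerivAt (sA p μ n) (2 * Real.pi * Complex.I * sA p μ (n + 1) q) q := by
  have := hasDerivAt_tsum_aux
    (F := fun m q => gT n (1 / μ) p (2 * Real.pi * Complex.I * q) m)
    (F' := fun m q => 2 * Real.pi * Complex.I *
      gT (n + 1) (1 / μ) p (2 * Real.pi * Complex.I * q) m) ?_ ?_ q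
  · rw [tsum_mul_left] at this
    exact this
  · intro m w
    have h1 : HasDerivAt (fun w : ℂ => -(Real.pi : ℂ) * (1 / μ) * ((m : ℂ) + p) ^ 2 +
        2 * Real.pi * Complex.I * w * ((m : ℂ) + p))
        (2 * Real.pi * Complex.I * 1 * ((m : ℂ) + p)) w :=
      (((hasDerivAt_id w).const_mul _).mul_const _).const_add _
    have h2 := h1.cexp.const_mul (((m : ℂ) + p) ^ n)
    unfold gT
    exact h2.congr_deriv (by ring)
  · intro R hR
    obtain ⟨u, hu, h⟩ := gT_bound n (1 / μ) (inv_re_pos hμ) (max ‖p‖ (2 * Real.pi * R))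
      (by positivity)
    refine ⟨u, hu, fun m w hw => h m _ _ (le_max_left _ _) (le_trans ?_ (le_max_right _ _))⟩
    have hpi := Real.pi_pos
    simp only [norm_mul, Complex.norm_ofNat, Complex.norm_real, Real.norm_of_nonneg hpi.le,
      Complex.norm_I, mul_one]
    gcongr

lemma sB_deriv (p μ : ℂ) (hμ : 0 < μ.re) (k : ℕ) (q : ℂ) :
    HasDerivAt (sB p μ k)
      (-(k : ℂ) * sB p μ (k - 1) q + 2 * Real.pi * μ * sB p μ (k + 1) q) q := by
  set c : ℂ := 2 * Real.pi * Complex.I * p with hc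
  have := hasDerivAt_tsum_aux
    (F := fun m q => gT k μ (-q) c m)
    (F' := fun m q => (-(k : ℂ) * gT (k - 1) μ (-q) c m +
      2 * Real.pi * μ * gT (k + 1) μ (-q) c m) + (-c) * gT k μ (-q) c m) ?_ ?_ q
  · rw [((((gT_summable (k - 1) μ hμ (-q) c).mul_left _).add
        ((gT_summable (k + 1) μ hμ (-q) c).mul_left _))).tsum_add
        ((gT_summable k μ hμ (-q) c).mul_left _),
      ((gT_summable (k - 1) μ hμ (-q) c).mul_left _).tsum_add
        ((gT_summable (k + 1) μ hμ (-q) c).mul_left _),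
      tsum_mul_left, tsum_mul_left, tsum_mul_left] at this
    have h1 : HasDerivAt (fun w : ℂ => Complex.exp (c * w)) (Complex.exp (c * q) * (c * 1)) q :=
      ((hasDerivAt_id q).const_mul c).cexp
    have h2 := h1.mul this
    unfold sB
    rw [← hc]
    exact h2.congr_deriv (by ring)
  · intro m w
    have h0 : HasDerivAt (fun w : ℂ => (m : ℂ) + -w) (-1) w :=
      ((hasDerivAt_id w).neg).const_add _
    have h1 := (((h0.pow 2).const_mul (-(Real.pi : ℂ) * μ)).add (h0.const_mul c)).cexp
    have h2 := (h0.pow k).mul h1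
    unfold gT
    refine h2.congr_deriv ?_
    simp only [Pi.pow_apply, Pi.add_apply]
    push_cast
    ring
  · intro R hR
    obtain ⟨u, hu, h⟩ := gT_bound k μ hμ (max R ‖c‖) (by positivity)
    exact ⟨u, hu, fun m w hw => h m _ _ (by rw [norm_neg]; exact hw.trans (le_max_left _ _))
      (le_max_right _ _)⟩

lemma base_case (p μ : ℂ) (hμ : 0 < μ.re) (q : ℂ) :
    sA p μ 0 q = μ ^ (1 / 2 : ℂ) * sB p μ 0 q := by
  have h0 : μ ≠ 0 := by rintro rfl; simp at hμ
  have hI := Complex.I_sq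
  have key := Complex.tsum_exp_neg_quadratic hμ (-Complex.I * p - μ * q)
  have hs : μ ^ (1 / 2 : ℂ) ≠ 0 := by simp [Complex.cpow_eq_zero_iff, h0]
  have hA : (∑' n : ℤ, Complex.exp (-Real.pi / μ * (n + Complex.I * (-Complex.I * p - μ * q)) ^ 2))
      = Complex.exp (Real.pi * μ * q ^ 2) * sA p μ 0 q := by
    unfold sA
    rw [← tsum_mul_left]
    congr 1; ext m
    rw [gT, pow_zero, one_mul, ← Complex.exp_add]
    congr 1
    have : (m : ℂ) + Complex.I * (-Complex.I * p - μ * q) = m + p - Complex.I * μ * q := by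
      linear_combination (-p) * hI
    rw [this]
    field_simp
    linear_combination (-μ ^ 2 * q ^ 2) * hI
  have hB : (∑' n : ℤ, Complex.exp (-Real.pi * μ * n ^ 2 +
      2 * Real.pi * (-Complex.I * p - μ * q) * n))
      = Complex.exp (Real.pi * μ * q ^ 2) * sB p μ 0 q := by
    unfold sB
    rw [← mul_assoc, ← tsum_mul_left, ← (Equiv.neg ℤ).tsum_eq]
    congr 1; ext m
    rw [gT, pow_zero, one_mul, ← Complex.exp_add, ← Complex.exp_add]
    congr 1
    simp only [Equiv.neg_apply]
    push_cast
    ring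
  rw [hA, hB] at key
  have he := Complex.exp_ne_zero (Real.pi * μ * q ^ 2)
  field_simp at key
  rw [← key]; ring

/-- Coefficients. -/
def cf (μ : ℂ) (n j : ℕ) : ℂ :=
  if 2 * j ≤ n then (-Complex.I) ^ (n - 2 * j) * μ ^ (n - j) * (n.factorial : ℂ) /
    ((2 * (Real.pi : ℂ)) ^ j * ((n - 2 * j).factorial : ℂ) * ((2 : ℂ) ^ j * (j.factorial : ℂ)))
  else 0

lemma cf_zero (μ : ℂ) (n : ℕ) : cf μ (n + 1) 0 = -Complex.I * μ * cf μ n 0 := by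
  have h1 : (n.factorial : ℂ) ≠ 0 := by exact_mod_cast n.factorial_ne_zero
  have h2 : ((n + 1).factorial : ℂ) ≠ 0 := by exact_mod_cast (n + 1).factorial_ne_zero
  simp [cf]
  field_simp
  ring

lemma cf_succ (μ : ℂ) (n j : ℕ) : cf μ (n + 1) (j + 1) =
    -Complex.I * μ * cf μ n (j + 1) +
      Complex.I / (2 * Real.pi) * ((n - 2 * j : ℕ) : ℂ) * cf μ n j := by
  have hpi : (Real.pi : ℂ) ≠ 0 := by exact_mod_cast Real.pi_ne_zero
  have hI := Complex.I_sq
  by_cases h : 2 * (j + 1) ≤ n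
  · obtain ⟨r, rfl⟩ := Nat.exists_eq_add_of_le h
    rw [cf, cf, cf, if_pos (by omega), if_pos (by omega), if_pos (by omega)]
    rw [show 2 * (j + 1) + r + 1 - 2 * (j + 1) = r + 1 by omega,
      show 2 * (j + 1) + r + 1 - (j + 1) = j + 2 + r by omega,
      show 2 * (j + 1) + r - 2 * (j + 1) = r by omega,
      show 2 * (j + 1) + r - (j + 1) = j + 1 + r by omega,
      show 2 * (j + 1) + r - 2 * j = r + 2 by omega,
      show 2 * (j + 1) + r - j = j + 2 + r by omega]
    have h1 : (r.factorial : ℂ) ≠ 0 := by exact_mod_cast r.factorial_ne_zero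
    have h2 : (j.factorial : ℂ) ≠ 0 := by exact_mod_cast j.factorial_ne_zero
    have h3 : (r : ℂ) + 1 ≠ 0 := by exact_mod_cast r.succ_ne_zero
    have h4 : (j : ℂ) + 1 ≠ 0 := by exact_mod_cast j.succ_ne_zero
    have h5 : (r : ℂ) + 1 + 1 ≠ 0 := by exact_mod_cast (r + 1).succ_ne_zero
    simp only [Nat.factorial_succ (2 * (j + 1) + r), Nat.factorial_succ r,
      Nat.factorial_succ (r + 1), Nat.factorial_succ j]
    generalize (2 * (j + 1) + r).factorial = N
    have e : (-Complex.I) ^ (r + 2) = -(-Complex.I) ^ r := by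
      rw [pow_add, neg_sq, hI]; ring
    rw [e, pow_succ (-Complex.I) r]
    generalize (-Complex.I) ^ r = X
    push_cast
    field_simp
    ring
  · by_cases h' : 2 * (j + 1) = n + 1
    · obtain rfl : n = 2 * j + 1 := by omega
      rw [cf, cf, cf, if_pos (by omega), if_neg (by omega), if_pos (by omega)]
      rw [show 2 * j + 1 + 1 - 2 * (j + 1) = 0 by omega,
        show 2 * j + 1 + 1 - (j + 1) = j + 1 by omega,
        show 2 * j + 1 - 2 * j = 1 by omega,
        show 2 * j + 1 - j = j + 1 by omega]
      have h2 : (j.factorial : ℂ) ≠ 0 := by exact_mod_cast j.factorial_ne_zero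
      have h4 : (j : ℂ) + 1 ≠ 0 := by exact_mod_cast j.succ_ne_zero
      simp only [Nat.factorial_succ (2 * j + 1), Nat.factorial_succ j]
      generalize (2 * j + 1).factorial = N
      push_cast
      simp only [Nat.factorial]
      field_simp
      ring_nf
      try rw [hI]
      try ring
    · rw [cf, cf, if_neg (by omega), if_neg (by omega)]
      rw [show n - 2 * j = 0 by omega]
      simp

lemma main_identity (p μ : ℂ) (hμ : 0 < μ.re) (n : ℕ) : ∀ q : ℂ,
    sA p μ n q = μ ^ (1 / 2 : ℂ) *
      ∑ j ∈ Finset.range (n + 1), cf μ n j * sB p μ (n - 2 * j) q := by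
  induction n with
  | zero => intro q; rw [base_case p μ hμ q]; simp [cf]
  | succ n ih =>
    intro q
    have hpi : (Real.pi : ℂ) ≠ 0 := by exact_mod_cast Real.pi_ne_zero
    have hI := Complex.I_sq
    have h1 := sA_deriv p μ hμ n q
    have h2 : HasDerivAt (fun q => μ ^ (1 / 2 : ℂ) *
        ∑ j ∈ Finset.range (n + 1), cf μ n j * sB p μ (n - 2 * j) q)
        (μ ^ (1 / 2 : ℂ) * ∑ j ∈ Finset.range (n + 1), cf μ n j *
          (-((n - 2 * j : ℕ) : ℂ) * sB p μ (n - 2 * j - 1) q +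
            2 * Real.pi * μ * sB p μ (n - 2 * j + 1) q)) q :=
      (HasDerivAt.fun_sum fun j _ => (sB_deriv p μ hμ (n - 2 * j) q).const_mul _).const_mul _
    rw [show sA p μ n = _ from funext ih] at h1
    have h3 := h1.unique h2
    have h4 : sA p μ (n + 1) q = μ ^ (1 / 2 : ℂ) * ∑ j ∈ Finset.range (n + 1), cf μ n j *
          (Complex.I / (2 * Real.pi) * ((n - 2 * j : ℕ) : ℂ) * sB p μ (n - 2 * j - 1) q
            - Complex.I * μ * sB p μ (n - 2 * j + 1) q) := by
      have h5 : sA p μ (n + 1) q = -Complex.I / (2 * Real.pi) *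
          (2 * Real.pi * Complex.I * sA p μ (n + 1) q) := by
        field_simp
        linear_combination (sA p μ (n + 1) q) * hI
      rw [h5, h3, mul_left_comm, Finset.mul_sum]
      congr 1
      refine Finset.sum_congr rfl fun j _ => ?_
      field_simp
      ring
    rw [h4]
    congr 1
    rw [Finset.sum_range_succ' _ (n + 1), cf_zero]
    simp only [cf_succ, add_mul, Finset.sum_add_distrib, mul_sub, Finset.sum_sub_distrib]
    have e1 : ∑ j ∈ Finset.range (n + 1), cf μ n j *
        (Complex.I * μ * sB p μ (n - 2 * j + 1) q) =
        ∑ j ∈ Finset.range (n + 2), Complex.I * μ * cf μ n j * sB p μ (n + 1 - 2 * j) q := by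
      rw [Finset.sum_range_succ _ (n + 1)]
      rw [show cf μ n (n + 1) = 0 from if_neg (by omega)]
      simp only [mul_zero, zero_mul, add_zero]
      refine Finset.sum_congr rfl fun j _ => ?_
      by_cases h : 2 * j ≤ n
      · rw [show n + 1 - 2 * j = n - 2 * j + 1 by omega]; ring
      · rw [show cf μ n j = 0 from if_neg h]; ring
    rw [e1, Finset.sum_range_succ' _ (n + 1)]
    have e2 : ∀ j, n + 1 - 2 * (j + 1) = n - 2 * j - 1 := fun j => by omega
    simp only [e2, neg_mul, Finset.sum_neg_distrib, mul_zero, Nat.sub_zero]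
    have e3 : ∑ j ∈ Finset.range (n + 1), cf μ n j *
        (Complex.I / (2 * Real.pi) * ((n - 2 * j : ℕ) : ℂ) * sB p μ (n - 2 * j - 1) q) =
        ∑ j ∈ Finset.range (n + 1),
        Complex.I / (2 * Real.pi) * ((n - 2 * j : ℕ) : ℂ) * cf μ n j * sB p μ (n - 2 * j - 1) q :=
      Finset.sum_congr rfl fun j _ => by ring
    rw [e3]
    ring

/-- Poisson-summation type identity (Lemma 5.1): for `Re μ > 0`,
`∑_{m∈ℤ} (m+p)ⁿ exp(−(π/μ)(m+p)² + 2πi(m+p)q)`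
equals `e^{2πipq}` times the stated finite sum of theta-type series, and all
the series involved converge absolutely. -/
theorem statement0 (p q μ : ℂ) (hμ : 0 < μ.re) (n : ℕ) :
    Summable (fun m : ℤ => ((m : ℂ) + p) ^ n *
      Complex.exp (-((Real.pi : ℂ) / μ) * ((m : ℂ) + p) ^ 2 +
        2 * (Real.pi : ℂ) * Complex.I * ((m : ℂ) + p) * q)) ∧
    (∀ j ∈ Finset.range (n / 2 + 1),
      Summable (fun m : ℤ => ((m : ℂ) - q) ^ (n - 2 * j) *
        Complex.exp (-(Real.pi : ℂ) * μ * ((m : ℂ) - q) ^ 2 +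
          2 * (Real.pi : ℂ) * Complex.I * p * ((m : ℂ) - q)))) ∧
    (∑' m : ℤ, ((m : ℂ) + p) ^ n *
        Complex.exp (-((Real.pi : ℂ) / μ) * ((m : ℂ) + p) ^ 2 +
          2 * (Real.pi : ℂ) * Complex.I * ((m : ℂ) + p) * q)) =
      Complex.exp (2 * (Real.pi : ℂ) * Complex.I * p * q) *
        ∑ j ∈ Finset.range (n / 2 + 1),
          ((-Complex.I) ^ (n - 2 * j) * μ ^ ((n : ℂ) + 1 / 2 - (j : ℂ)) *
              (n.factorial : ℂ) /
            ((2 * (Real.pi : ℂ)) ^ j * ((n - 2 * j).factorial : ℂ) *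
              ((2 : ℂ) ^ j * (j.factorial : ℂ)))) *
          (∑' m : ℤ, ((m : ℂ) - q) ^ (n - 2 * j) *
            Complex.exp (-(Real.pi : ℂ) * μ * ((m : ℂ) - q) ^ 2 +
              2 * (Real.pi : ℂ) * Complex.I * p * ((m : ℂ) - q))) := by
  have h0 : μ ≠ 0 := by rintro rfl; simp at hμ
  have eA : ∀ n : ℕ, (fun m : ℤ => ((m : ℂ) + p) ^ n *
      Complex.exp (-((Real.pi : ℂ) / μ) * ((m : ℂ) + p) ^ 2 +
        2 * (Real.pi : ℂ) * Complex.I * ((m : ℂ) + p) * q)) =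
      gT n (1 / μ) p (2 * Real.pi * Complex.I * q) := by
    intro n; ext m; unfold gT; congr 2; ring
  have eB : ∀ k : ℕ, (fun m : ℤ => ((m : ℂ) - q) ^ k *
        Complex.exp (-(Real.pi : ℂ) * μ * ((m : ℂ) - q) ^ 2 +
          2 * (Real.pi : ℂ) * Complex.I * p * ((m : ℂ) - q))) =
      gT k μ (-q) (2 * Real.pi * Complex.I * p) := by
    intro n; ext m; unfold gT; rw [← sub_eq_add_neg]
  simp only [eA, eB]
  refine ⟨gT_summable _ _ (inv_re_pos hμ) _ _, fun j _ => gT_summable _ _ hμ _ _, ?_⟩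
  have hm := main_identity p μ hμ n q
  unfold sA at hm
  rw [hm, Finset.mul_sum, Finset.mul_sum]
  symm
  refine Finset.sum_subset_zero_on_sdiff (Finset.range_subset_range.mpr (by omega)) ?_ ?_
  · intro j hj
    simp only [Finset.mem_sdiff, Finset.mem_range] at hj
    rw [cf, if_neg (by omega)]; ring
  · intro j hj
    have hj' : 2 * j ≤ n := by have := Finset.mem_range.mp hj; omega
    have e : μ ^ ((n : ℂ) + 1 / 2 - (j : ℂ)) = μ ^ (1 / 2 : ℂ) * μ ^ (n - j) := by
      rw [← Complex.cpow_natCast, ← Complex.cpow_add _ _ h0, Nat.cast_sub (by omega)]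
      congr 1; ring
    rw [cf, if_pos hj', e, sB]
    ring


end
end

section
/- Let p, q ∈ ℂ, let μ ∈ ℂ with Re μ > 0, and let n ≥ 0 be an integer. Then: (i) ∂μⁿθ[p,q](i/μ) = e^{2πipq} ∑_{j=0}^{n} C(j|2n) μ^{2n+1/2−j} ∂μ^{n−j}θ[−q,p](iμ); (ii) ∂μⁿ∂qθ[p,q](i/μ) = e^{2πipq} ∑_{j=0}^{n} C(j|2n+1) μ^{2n+3/2−j} ∂μ^{n−j}∂qθ[−q,p](iμ), where ∂qθ[−q,p] denotes the characteristic-derivative series taken at the pair of characteristics (−q, p). -/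
noncomputable section

open Complex in
lemma aux_bound (k : ℕ) (m : ℤ) (μ a b c : ℂ) (A B C : ℝ) (ha : ‖a‖ ≤ A) (hb : ‖b‖ ≤ B)
    (hc : ‖c‖ ≤ C) :
    ‖((m : ℂ) + a) ^ k * cexp (-(Real.pi : ℂ) * m ^ 2 * μ + m * b + c)‖ ≤
      (k.factorial * Real.exp (A + C)) *
        (((|m| : ℤ) : ℝ) ^ 0 * Real.exp (-Real.pi * (μ.re * m ^ 2 - 2 * ((B + 1) / (2 * Real.pi)) * |m|))) := by
  have h1 : ‖(m : ℂ) + a‖ ≤ |(m : ℝ)| + A := by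
    refine (norm_add_le _ _).trans ?_
    have : ‖(m : ℂ)‖ = |(m : ℝ)| := by simp
    rw [this]; gcongr
  have hA : 0 ≤ A := (norm_nonneg _).trans ha
  have h2 : ‖(m : ℂ) + a‖ ^ k ≤ k.factorial * Real.exp (|(m : ℝ)| + A) := by
    calc _ ≤ (|(m : ℝ)| + A) ^ k := by gcongr
      _ ≤ _ := by
        have := Real.pow_div_factorial_le_exp (|(m : ℝ)| + A) (by positivity) k
        rwa [div_le_iff₀' (by positivity)] at this
  have h3 : (-(Real.pi : ℂ) * m ^ 2 * μ + m * b + c).re ≤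
      -Real.pi * m ^ 2 * μ.re + |(m : ℝ)| * B + C := by
    have e1 : (-(Real.pi : ℂ) * m ^ 2 * μ).re = -Real.pi * m ^ 2 * μ.re := by
      have : (-(Real.pi : ℂ) * m ^ 2 * μ) = ((-Real.pi * m ^ 2 : ℝ) : ℂ) * μ := by push_cast; ring
      rw [this, Complex.re_ofReal_mul]
    have e2 : ((m : ℂ) * b).re ≤ |(m : ℝ)| * B := by
      refine (Complex.re_le_norm _).trans ?_
      rw [norm_mul]
      have : ‖(m : ℂ)‖ = |(m : ℝ)| := by simp
      rw [this]; gcongr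
    have e3 : c.re ≤ C := (Complex.re_le_norm _).trans hc
    rw [Complex.add_re, Complex.add_re, e1]; linarith
  rw [norm_mul, norm_pow, Complex.norm_exp]
  calc _ ≤ (k.factorial * Real.exp (|(m : ℝ)| + A)) *
        Real.exp (-Real.pi * m ^ 2 * μ.re + |(m : ℝ)| * B + C) := by gcongr
    _ = _ := by
      have hpi := Real.pi_ne_zero
      rw [pow_zero, one_mul, mul_assoc (k.factorial : ℝ), mul_assoc (k.factorial : ℝ), ← Real.exp_add, ← Real.exp_add]
      congr 2
      push_cast
      field_simp
      ring

open Complex in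
lemma aux_deriv (μ : ℂ) (hμ : 0 < μ.re) (K : ℕ) (a b c : ℂ → ℂ)
    (ha : Differentiable ℂ a) (hb : Differentiable ℂ b) (hc : Differentiable ℂ c) (q : ℂ) :
    let f : ℤ → ℂ → ℂ := fun m x =>
      ((m : ℂ) + a x) ^ K * cexp (-(Real.pi : ℂ) * m ^ 2 * μ + m * b x + c x)
    HasDerivAt (fun x => ∑' m : ℤ, f m x) (∑' m : ℤ, deriv (f m) q) q ∧
      Summable (fun m => f m q) := by
  intro f
  have hK : IsCompact (Metric.closedBall q 1) := isCompact_closedBall q 1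
  obtain ⟨A, hA⟩ := hK.exists_bound_of_continuousOn ha.continuous.continuousOn
  obtain ⟨B, hB⟩ := hK.exists_bound_of_continuousOn hb.continuous.continuousOn
  obtain ⟨C, hC⟩ := hK.exists_bound_of_continuousOn hc.continuous.continuousOn
  have hs := (summable_pow_mul_jacobiTheta₂_term_bound ((B + 1) / (2 * Real.pi)) hμ 0).mul_left
    (K.factorial * Real.exp (A + C))
  have hle : ∀ (m : ℤ) (x : ℂ), x ∈ Metric.ball q 1 → ‖f m x‖ ≤ _ := fun m x hx =>
    aux_bound K m μ (a x) (b x) (c x) A B C (hA x (Metric.ball_subset_closedBall hx))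
      (hB x (Metric.ball_subset_closedBall hx)) (hC x (Metric.ball_subset_closedBall hx))
  have hd : ∀ m, DifferentiableOn ℂ (f m) (Metric.ball q 1) := fun m =>
    Differentiable.differentiableOn (by fun_prop)
  have hq : q ∈ Metric.ball q 1 := Metric.mem_ball_self one_pos
  have h1 := Complex.hasSum_deriv_of_summable_norm hs hd Metric.isOpen_ball hle hq
  have h2 := (Complex.differentiableOn_tsum_of_summable_norm hs hd Metric.isOpen_ball hle).differentiableAt
    (Metric.isOpen_ball.mem_nhds hq)
  refine ⟨?_, Summable.of_norm_bounded hs (fun m => hle m q hq)⟩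
  rw [h1.tsum_eq]
  exact h2.hasDerivAt

/-- Power-weighted theta series. -/
def Ser (k : ℕ) (p μ q : ℂ) : ℂ := ∑' m : ℤ, ((m : ℂ) + p) ^ k *
      Complex.exp (-(Real.pi : ℂ) * ((m : ℂ) + p) ^ 2 * μ +
        2 * (Real.pi : ℂ) * Complex.I * ((m : ℂ) + p) * q)

/-- Dual power-weighted theta series. -/
def Ter (k : ℕ) (p μ q : ℂ) : ℂ := ∑' m : ℤ, ((m : ℂ) - q) ^ k *
      Complex.exp (-(Real.pi : ℂ) * ((m : ℂ) - q) ^ 2 * μ +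
        2 * (Real.pi : ℂ) * Complex.I * m * p)

lemma ter_eq (k : ℕ) (p μ q : ℂ) :
    Ter k p μ q = Complex.exp (2 * (Real.pi : ℂ) * Complex.I * p * q) * Ser k (-q) μ p := by
  rw [Ter, Ser, ← tsum_mul_left]
  congr 1; ext m
  rw [mul_left_comm, ← Complex.exp_add]
  congr 2
  ring

lemma ser_deriv (k : ℕ) (p μ q : ℂ) (hμ : 0 < μ.re) :
    HasDerivAt (Ser k p μ) (2 * Real.pi * Complex.I * Ser (k + 1) p μ q) q := by
  have h := (aux_deriv μ hμ k (fun _ => p)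
    (fun x => -2 * Real.pi * p * μ + 2 * Real.pi * Complex.I * x)
    (fun x => -Real.pi * p ^ 2 * μ + 2 * Real.pi * Complex.I * p * x)
    (by fun_prop) (by fun_prop) (by fun_prop) q).1
  convert h using 1
  · ext x
    unfold Ser
    congr 1; ext m
    congr 2; ring
  · rw [Ser, ← tsum_mul_left]
    congr 1; ext m
    symm
    apply HasDerivAt.deriv
    have e : (fun x : ℂ => ((m : ℂ) + p) ^ k * Complex.exp (-(Real.pi : ℂ) * m ^ 2 * μ +
        m * (-2 * Real.pi * p * μ + 2 * Real.pi * Complex.I * x) +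
        (-Real.pi * p ^ 2 * μ + 2 * Real.pi * Complex.I * p * x))) =
      fun x : ℂ => ((m : ℂ) + p) ^ k * Complex.exp (-(Real.pi : ℂ) * ((m : ℂ) + p) ^ 2 * μ +
        2 * (Real.pi : ℂ) * Complex.I * ((m : ℂ) + p) * x) := by
      ext x; congr 2; ring
    beta_reduce
    rw [e]
    have := ((((hasDerivAt_id q).const_mul (2 * (Real.pi : ℂ) * Complex.I * ((m : ℂ) + p))).const_add
      (-(Real.pi : ℂ) * ((m : ℂ) + p) ^ 2 * μ)).cexp).const_mul (((m : ℂ) + p) ^ k)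
    refine HasDerivAt.congr_deriv this ?_
    simp only [id]
    ring

lemma ter_summable (k : ℕ) (p μ q : ℂ) (hμ : 0 < μ.re) :
    Summable (fun m : ℤ => ((m : ℂ) - q) ^ k *
      Complex.exp (-(Real.pi : ℂ) * ((m : ℂ) - q) ^ 2 * μ +
        2 * (Real.pi : ℂ) * Complex.I * m * p)) := by
  have h := (aux_deriv μ hμ k (fun x => -x)
    (fun x => 2 * Real.pi * x * μ + 2 * Real.pi * Complex.I * p)
    (fun x => -Real.pi * x ^ 2 * μ)
    (by fun_prop) (by fun_prop) (by fun_prop) q).2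
  convert h using 1
  ext m
  simp only [← sub_eq_add_neg]
  congr 2; ring

lemma ter_deriv (k : ℕ) (p μ q : ℂ) (hμ : 0 < μ.re) :
    HasDerivAt (Ter k p μ)
      (2 * Real.pi * μ * Ter (k + 1) p μ q - k * Ter (k - 1) p μ q) q := by
  have h := (aux_deriv μ hμ k (fun x => -x)
    (fun x => 2 * Real.pi * x * μ + 2 * Real.pi * Complex.I * p)
    (fun x => -Real.pi * x ^ 2 * μ)
    (by fun_prop) (by fun_prop) (by fun_prop) q).1
  convert h using 1
  · ext x
    unfold Ter
    congr 1; ext m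
    simp only [← sub_eq_add_neg]
    congr 2; ring
  · rw [Ter, Ter, ← tsum_mul_left, ← tsum_mul_left, ← Summable.tsum_sub
      ((ter_summable _ p μ q hμ).mul_left _) ((ter_summable _ p μ q hμ).mul_left _)]
    congr 1; ext m
    symm
    apply HasDerivAt.deriv
    have e : (fun x : ℂ => ((m : ℂ) + -x) ^ k * Complex.exp (-(Real.pi : ℂ) * m ^ 2 * μ +
        m * (2 * Real.pi * x * μ + 2 * Real.pi * Complex.I * p) +
        (-Real.pi * x ^ 2 * μ))) =
      fun x : ℂ => ((m : ℂ) - x) ^ k * Complex.exp (-(Real.pi : ℂ) * ((m : ℂ) - x) ^ 2 * μ +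
        2 * (Real.pi : ℂ) * Complex.I * m * p) := by
      ext x
      simp only [← sub_eq_add_neg]
      congr 2; ring
    beta_reduce
    rw [e]
    have h0 : HasDerivAt (fun x : ℂ => (m : ℂ) - x) (-1) q := (hasDerivAt_id q).const_sub _
    have := (h0.pow k).mul
      (((((h0.pow 2).const_mul (-(Real.pi : ℂ))).mul_const μ).add_const
        (2 * (Real.pi : ℂ) * Complex.I * m * p)).cexp)
    refine HasDerivAt.congr_deriv this ?_
    simp only [Pi.pow_apply]
    push_cast
    ring

lemma base (p μ q : ℂ) (hμ : 0 < μ.re) :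
    Ser 0 p (1 / μ) q = μ ^ (1 / 2 : ℂ) * Ter 0 p μ q := by
  have hμ0 : μ ≠ 0 := by rintro rfl; simp at hμ
  have h1 : Ser 0 p (1 / μ) q = Complex.exp (-Real.pi * p ^ 2 / μ + 2 * Real.pi * Complex.I * p * q)
      * jacobiTheta₂ (q + Complex.I * p / μ) (Complex.I / μ) := by
    rw [Ser, jacobiTheta₂, ← tsum_mul_left]
    congr 1; ext m
    rw [jacobiTheta₂_term, ← Complex.exp_add, pow_zero, one_mul]
    congr 1
    field_simp
    linear_combination (-2 * m * p - m ^ 2) * Complex.I_sq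
  have h2 : Ter 0 p μ q = Complex.exp (-Real.pi * q ^ 2 * μ)
      * jacobiTheta₂ (p - Complex.I * q * μ) (Complex.I * μ) := by
    rw [Ter, jacobiTheta₂, ← tsum_mul_left]
    congr 1; ext m
    rw [jacobiTheta₂_term, ← Complex.exp_add, pow_zero, one_mul]
    congr 1
    linear_combination (2 * m * q - m ^ 2) * Real.pi * μ * Complex.I_sq
  have hI := Complex.I_ne_zero
  have e1 : (p - Complex.I * q * μ) / (Complex.I * μ) = -(q + Complex.I * p / μ) := by
    field_simp
    linear_combination p * Complex.I_sq
  have e2 : -1 / (Complex.I * μ) = Complex.I / μ := by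
    field_simp
    linear_combination (-1) * Complex.I_sq
  have e3 : -Complex.I * (Complex.I * μ) = μ := by
    linear_combination (-μ) * Complex.I_sq
  have hne : μ ^ (1 / 2 : ℂ) ≠ 0 := by simp [Complex.cpow_eq_zero_iff, hμ0]
  rw [h1, h2, jacobiTheta₂_functional_equation (p - Complex.I * q * μ), e1, e2, e3, jacobiTheta₂_neg_left]
  have e4 : Complex.exp (-Real.pi * p ^ 2 / μ + 2 * Real.pi * Complex.I * p * q) =
      Complex.exp (-Real.pi * q ^ 2 * μ) *
      Complex.exp (-Real.pi * Complex.I * (p - Complex.I * q * μ) ^ 2 / (Complex.I * μ)) := by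
    rw [← Complex.exp_add]
    congr 1
    field_simp
    linear_combination (q ^ 2 * μ ^ 2) * Complex.I_sq
  rw [e4]
  field_simp

/-- Hermite-type coefficients. -/
def hco (μ : ℂ) (N j : ℕ) : ℂ := if 2 * j ≤ N then
  (2 * Real.pi * μ) ^ (N - j) * (-1) ^ j * N.factorial /
    (j.factorial * (N - 2 * j).factorial * 2 ^ j) else 0

lemma hco_zero (μ : ℂ) (N : ℕ) : hco μ (N + 1) 0 = 2 * Real.pi * μ * hco μ N 0 := by
  have : ∀ N : ℕ, (N.factorial : ℂ) ≠ 0 := fun N => by exact_mod_cast N.factorial_ne_zero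
  simp [hco, this]
  ring

lemma hco_step (μ : ℂ) (N j : ℕ) (T : ℕ → ℂ) :
    hco μ (N + 1) (j + 1) * T (N + 1 - 2 * (j + 1)) =
      hco μ N (j + 1) * (2 * Real.pi * μ * T (N - 2 * (j + 1) + 1)) -
      hco μ N j * ((N - 2 * j : ℕ) * T (N - 2 * j - 1)) := by
  have hf : ∀ N : ℕ, (N.factorial : ℂ) ≠ 0 := fun N => by exact_mod_cast N.factorial_ne_zero
  rcases lt_trichotomy N (2 * j + 1) with h | h | h
  · have h1 : ¬ 2 * (j + 1) ≤ N + 1 := by omega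
    have h2 : ¬ 2 * (j + 1) ≤ N := by omega
    have h3 : N - 2 * j = 0 := by omega
    simp only [hco, h1, h2, h3, if_false]
    simp
  · subst h
    have h1 : 2 * (j + 1) ≤ 2 * j + 1 + 1 := by omega
    have h2 : ¬ 2 * (j + 1) ≤ 2 * j + 1 := by omega
    have h3 : 2 * j ≤ 2 * j + 1 := by omega
    have i1 : 2 * j + 1 + 1 - (j + 1) = j + 1 := by omega
    have i2 : 2 * j + 1 - j = j + 1 := by omega
    have i3 : 2 * j + 1 + 1 - 2 * (j + 1) = 0 := by omega
    have i4 : 2 * j + 1 - 2 * j = 1 := by omega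
    simp only [hco, h1, h2, h3, if_false, if_true, i1, i2, i3, i4, Nat.factorial_succ (2 * j + 1), Nat.factorial_succ j]
    have := hf j
    have := hf (2 * j + 1)
    have : (j : ℂ) + 1 ≠ 0 := by exact_mod_cast j.succ_ne_zero
    push_cast
    simp
    field_simp
    ring
  · obtain ⟨r, rfl⟩ : ∃ r, N = 2 * j + 2 + r := ⟨N - (2 * j + 2), by omega⟩
    have h1 : 2 * (j + 1) ≤ 2 * j + 2 + r + 1 := by omega
    have h2 : 2 * (j + 1) ≤ 2 * j + 2 + r := by omega
    have h3 : 2 * j ≤ 2 * j + 2 + r := by omega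
    have i1 : 2 * j + 2 + r + 1 - (j + 1) = j + r + 2 := by omega
    have i2 : 2 * j + 2 + r - j = j + r + 2 := by omega
    have i3 : 2 * j + 2 + r + 1 - 2 * (j + 1) = r + 1 := by omega
    have i4 : 2 * j + 2 + r - 2 * j = r + 2 := by omega
    have i5 : 2 * j + 2 + r - 2 * (j + 1) = r := by omega
    have i6 : 2 * j + 2 + r - (j + 1) = j + r + 1 := by omega
    have i7 : r + 2 - 1 = r + 1 := by omega
    simp only [hco, h1, h2, h3, if_true, i1, i2, i3, i4, i5, i6, i7,
      Nat.factorial_succ (2 * j + 2 + r), Nat.factorial_succ j, Nat.factorial_succ (r + 1), Nat.factorial_succ r]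
    have := hf j
    have := hf r
    have := hf (2 * j + 2 + r)
    have : (j : ℂ) + 1 ≠ 0 := by exact_mod_cast j.succ_ne_zero
    have : (r : ℂ) + 1 ≠ 0 := by exact_mod_cast r.succ_ne_zero
    have : (r : ℂ) + 1 + 1 ≠ 0 := by exact_mod_cast (r + 1).succ_ne_zero
    push_cast
    field_simp
    ring

lemma main_ind (p μ : ℂ) (hμ : 0 < μ.re) (N : ℕ) : ∀ q : ℂ,
    (2 * Real.pi * Complex.I) ^ N * Ser N p (1 / μ) q =
      μ ^ (1 / 2 : ℂ) * ∑ j ∈ Finset.range (N + 1), hco μ N j * Ter (N - 2 * j) p μ q := by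
  induction N with
  | zero => intro q; rw [base p μ q hμ]; simp [hco]
  | succ N ih =>
    intro q
    have hμ' : 0 < (1 / μ).re := by
      rw [one_div, Complex.inv_re]
      have : 0 < Complex.normSq μ := Complex.normSq_pos.2 (by rintro rfl; simp at hμ)
      positivity
    have d1 := (ser_deriv N p (1 / μ) q hμ').const_mul ((2 * Real.pi * Complex.I) ^ N)
    have d2 := (HasDerivAt.fun_sum (u := Finset.range (N + 1)) (fun j _ =>
      (ter_deriv (N - 2 * j) p μ q hμ).const_mul (hco μ N j))).const_mul (μ ^ (1 / 2 : ℂ))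
    have e : (fun x => (2 * Real.pi * Complex.I) ^ N * Ser N p (1 / μ) x) =
      fun x => μ ^ (1 / 2 : ℂ) * ∑ j ∈ Finset.range (N + 1), hco μ N j * Ter (N - 2 * j) p μ x :=
      funext ih
    rw [e] at d1
    have := d1.unique d2
    rw [pow_succ, mul_assoc, this]
    congr 1
    simp only [mul_sub, Finset.sum_sub_distrib]
    have hlast : hco μ N (N + 1) = 0 := by
      rw [hco, if_neg (by omega)]
    have s1 := Finset.sum_range_succ
      (fun j => hco μ N j * (2 * Real.pi * μ * Ter (N - 2 * j + 1) p μ q)) (N + 1)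
    rw [hlast, zero_mul, add_zero] at s1
    rw [← s1, Finset.sum_range_succ', Finset.sum_range_succ' _ (N + 1), hco_zero,
      Finset.sum_congr rfl (fun j _ => hco_step μ N j (fun k => Ter k p μ q)),
      Finset.sum_sub_distrib]
    simp only [mul_zero, Nat.sub_zero]
    ring

lemma main_coef (p μ q : ℂ) (hμ : 0 < μ.re) (N M : ℕ) (hM : M ≤ N) (hM1 : 2 * M ≤ N)
    (hM2 : N < 2 * (M + 1)) :
    Ser N p (1 / μ) q = Complex.exp (2 * (Real.pi : ℂ) * Complex.I * p * q) *
      ∑ j ∈ Finset.range (M + 1), Ccoef j N * μ ^ ((N : ℂ) + 1 / 2 - (j : ℂ)) *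
        ((-(Real.pi : ℂ)) ^ j)⁻¹ * Ser (N - 2 * j) (-q) μ p := by
  have hμ0 : μ ≠ 0 := by rintro rfl; simp at hμ
  have hpi : (Real.pi : ℂ) ≠ 0 := by exact_mod_cast Real.pi_ne_zero
  have hI := Complex.I_ne_zero
  have h := main_ind p μ hμ N q
  have hsub : ∑ j ∈ Finset.range (M + 1), hco μ N j * Ter (N - 2 * j) p μ q =
      ∑ j ∈ Finset.range (N + 1), hco μ N j * Ter (N - 2 * j) p μ q := by
    apply Finset.sum_subset
    · intro j; simp only [Finset.mem_range]; omega
    · intro j _ hj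
      simp only [Finset.mem_range] at hj
      rw [hco, if_neg (by omega), zero_mul]
  rw [← hsub] at h
  have hne : (2 * Real.pi * Complex.I) ^ N ≠ 0 := pow_ne_zero _ (mul_ne_zero (mul_ne_zero two_ne_zero hpi) hI)
  apply mul_left_cancel₀ hne
  rw [h, Finset.mul_sum, Finset.mul_sum, Finset.mul_sum]
  apply Finset.sum_congr rfl
  intro j hj
  simp only [Finset.mem_range] at hj
  obtain ⟨r, rfl⟩ : ∃ r, N = 2 * j + r := ⟨N - 2 * j, by omega⟩
  have i1 : 2 * j + r - j = j + r := by omega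
  have i2 : 2 * j + r - 2 * j = r := by omega
  have hc : μ ^ (((2 * j + r : ℕ) : ℂ) + 1 / 2 - (j : ℂ)) = μ ^ (1 / 2 : ℂ) * μ ^ (j + r) := by
    rw [← Complex.cpow_natCast, ← Complex.cpow_add _ _ hμ0]
    congr 1; push_cast; ring
  rw [ter_eq, hc, hco, if_pos (by omega), Ccoef, i1, i2]
  have hf : ∀ N : ℕ, (N.factorial : ℂ) ≠ 0 := fun N => by exact_mod_cast N.factorial_ne_zero
  have hII : (2 * Real.pi * Complex.I) ^ (2 * j + r) * (-Complex.I) ^ (2 * j + r) =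
      (2 * Real.pi) ^ (j + r) * (2 * Real.pi) ^ j := by
    rw [← mul_pow, ← pow_add]
    congr 1
    · linear_combination (-2 * Real.pi) * Complex.I_sq
    · omega
  have hneg : ((-(Real.pi : ℂ)) ^ j)⁻¹ = (-1) ^ j * ((Real.pi : ℂ) ^ j)⁻¹ := by
    rw [neg_pow, mul_inv, ← inv_pow]; norm_num
  rw [hneg]
  calc _ = (2 * Real.pi) ^ (j + r) * (2 * Real.pi) ^ j * (μ ^ (1 / 2 : ℂ) * μ ^ (j + r) * (-1) ^ j * ((2 * j + r).factorial : ℂ) /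
        ((2 : ℂ) ^ j * (r.factorial : ℂ) * ((2 : ℂ) ^ j * (j.factorial : ℂ))) * ((Real.pi : ℂ) ^ j)⁻¹ *
        Complex.exp (2 * (Real.pi : ℂ) * Complex.I * p * q) * Ser r (-q) μ p) := by
        have := hf j
        have := hf r
        simp only [mul_pow]
        field_simp
    _ = _ := by
        rw [← hII]; ring

/-- Lemma 5.3 (inversion part): behavior of `∂μⁿθ[p,q]` and `∂μⁿ∂qθ[p,q]` under
`iμ ↦ i/μ`, i.e. `μ ↦ 1/μ`. -/
theorem statement3 (p q μ : ℂ) (hμ : 0 < μ.re) (n : ℕ) :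
    thetaD n p q (1 / μ) =
        Complex.exp (2 * (Real.pi : ℂ) * Complex.I * p * q) *
          ∑ j ∈ Finset.range (n + 1),
            Ccoef j (2 * n) * μ ^ (2 * (n : ℂ) + 1 / 2 - (j : ℂ)) *
              thetaD (n - j) (-q) p μ ∧
    thetaQD n p q (1 / μ) =
        Complex.exp (2 * (Real.pi : ℂ) * Complex.I * p * q) *
          ∑ j ∈ Finset.range (n + 1),
            Ccoef j (2 * n + 1) * μ ^ (2 * (n : ℂ) + 3 / 2 - (j : ℂ)) *
              thetaQD (n - j) (-q) p μ := by
  have hpi : (Real.pi : ℂ) ≠ 0 := by exact_mod_cast Real.pi_ne_zero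
  have hD : ∀ k a b c, thetaD k a b c = (-(Real.pi : ℂ)) ^ k * Ser (2 * k) a c b :=
    fun _ _ _ _ => rfl
  have hQ : ∀ k a b c, thetaQD k a b c =
      2 * Complex.I * Real.pi * ((-(Real.pi : ℂ)) ^ k * Ser (2 * k + 1) a c b) := by
    intro k a b c
    change 2 * Complex.I * (-1 : ℂ) ^ k * (Real.pi : ℂ) ^ (k + 1) * Ser (2 * k + 1) a c b = _
    rw [neg_pow (Real.pi : ℂ)]; ring
  constructor
  · rw [hD, main_coef p μ q hμ (2 * n) n (by omega) le_rfl (by omega), mul_left_comm,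
      Finset.mul_sum]
    congr 1
    apply Finset.sum_congr rfl
    intro j hj
    simp only [Finset.mem_range] at hj
    obtain ⟨r, rfl⟩ : ∃ r, n = j + r := ⟨n - j, by omega⟩
    have i1 : j + r - j = r := by omega
    have i2 : 2 * (j + r) - 2 * j = 2 * r := by omega
    have i3 : ((2 * (j + r) : ℕ) : ℂ) = 2 * ((j + r : ℕ) : ℂ) := by push_cast; ring
    rw [hD, i1, i2, i3, pow_add]
    have : (-(Real.pi : ℂ)) ^ j ≠ 0 := pow_ne_zero _ (neg_ne_zero.2 hpi)
    field_simp
  · rw [hQ, main_coef p μ q hμ (2 * n + 1) n (by omega) (by omega) (by omega),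
      mul_left_comm ((-(Real.pi : ℂ)) ^ n), mul_left_comm (2 * Complex.I * Real.pi), Finset.mul_sum, Finset.mul_sum]
    congr 1
    apply Finset.sum_congr rfl
    intro j hj
    simp only [Finset.mem_range] at hj
    obtain ⟨r, rfl⟩ : ∃ r, n = j + r := ⟨n - j, by omega⟩
    have i1 : j + r - j = r := by omega
    have i2 : 2 * (j + r) + 1 - 2 * j = 2 * r + 1 := by omega
    have i3 : ((2 * (j + r) + 1 : ℕ) : ℂ) + 1 / 2 - (j : ℂ) =
        2 * ((j + r : ℕ) : ℂ) + 3 / 2 - (j : ℂ) := by push_cast; ring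
    rw [hQ, i1, i2, i3, pow_add]
    have : (-(Real.pi : ℂ)) ^ j ≠ 0 := pow_ne_zero _ (neg_ne_zero.2 hpi)
    field_simp

end
end

section
/- Let μ ∈ ℂ with Re μ > 0 and let n ≥ 0 be an integer. Then: (i) ∂μⁿθ₂(iμ+1) = e^{πi/4} ∂μⁿθ₂(iμ); (ii) ∂μⁿθ₃(iμ+1) = ∂μⁿθ₄(iμ); (iii) ∂μⁿθ₄(iμ+1) = ∂μⁿθ₃(iμ); (iv) ∂μⁿθ₂(i/μ) = ∑_{j=0}^{n} C(j|2n) μ^{2n+1/2−j} ∂μ^{n−j}θ₄(iμ); (v) ∂μⁿθ₃(i/μ) = ∑_{j=0}^{n} C(j|2n) μ^{2n+1/2−j} ∂μ^{n−j}θ₃(iμ); (vi) ∂μⁿθ₄(i/μ) = ∑_{j=0}^{n} C(j|2n) μ^{2n+1/2−j} ∂μ^{n−j}θ₂(iμ). -/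
noncomputable section

/-- Summable majorant for the terms of `thetaD`. -/
def thetaBound (k : ℕ) (T : ℝ) (m : ℤ) : ℝ :=
  2 ^ (k - 1) * (((|m| : ℤ) : ℝ) ^ k * Real.exp (-Real.pi * (T * m ^ 2 - 2 * T * (|m| : ℤ))) +
    ((|m| : ℤ) : ℝ) ^ 0 * Real.exp (-Real.pi * (T * m ^ 2 - 2 * T * (|m| : ℤ))))

lemma summable_thetaBound (k : ℕ) {T : ℝ} (hT : 0 < T) : Summable (thetaBound k T) := by
  unfold thetaBound
  have h1 := summable_pow_mul_jacobiTheta₂_term_bound T hT k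
  have h2 := summable_pow_mul_jacobiTheta₂_term_bound T hT 0
  exact (h1.add h2).mul_left _

lemma term_le (k : ℕ) {T : ℝ} (hT : 0 < T) (p q : ℝ) (hp : |p| ≤ 1) (m : ℤ) (μ : ℂ)
    (hμ : T < μ.re) :
    ‖((m : ℂ) + p) ^ k * Complex.exp (-(Real.pi : ℂ) * ((m : ℂ) + p) ^ 2 * μ +
        2 * (Real.pi : ℂ) * Complex.I * ((m : ℂ) + p) * q)‖ ≤ thetaBound k T m := by
  have e : (m : ℂ) + p = ((m + p : ℝ) : ℂ) := by push_cast; ring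
  rw [e, norm_mul, norm_pow, Complex.norm_real, Complex.norm_exp]
  have hre : (-(Real.pi : ℂ) * (((m + p : ℝ) : ℂ)) ^ 2 * μ +
        2 * (Real.pi : ℂ) * Complex.I * ((m + p : ℝ) : ℂ) * q).re =
        -Real.pi * ((m + p) ^ 2 * μ.re) := by
    have : (-(Real.pi : ℂ) * (((m + p : ℝ) : ℂ)) ^ 2 * μ +
        2 * (Real.pi : ℂ) * Complex.I * ((m + p : ℝ) : ℂ) * q) =
        ((-Real.pi * (m + p) ^ 2 : ℝ) : ℂ) * μ + ((2 * Real.pi * (m + p) * q : ℝ) : ℂ) * Complex.I := by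
      push_cast; ring
    rw [this, Complex.add_re, Complex.re_ofReal_mul, Complex.re_ofReal_mul]
    simp
    ring
  rw [hre, Real.norm_eq_abs]
  unfold thetaBound
  rw [← add_mul, ← mul_assoc (2 ^ (k - 1) : ℝ), pow_zero, Int.cast_abs]
  have habs : |(m : ℝ) + p| ≤ |(m : ℝ)| + 1 := (abs_add_le _ _).trans (by linarith)
  have h1 : |(m : ℝ) + p| ^ k ≤ 2 ^ (k - 1) * (|(m : ℝ)| ^ k + 1) := by
    calc |(m : ℝ) + p| ^ k ≤ (|(m : ℝ)| + 1) ^ k := by gcongr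
      _ ≤ 2 ^ (k - 1) * (|(m : ℝ)| ^ k + 1 ^ k) := add_pow_le (abs_nonneg _) zero_le_one k
      _ = _ := by rw [one_pow]
  have h2 : T * (m : ℝ) ^ 2 - 2 * T * |(m : ℝ)| ≤ ((m : ℝ) + p) ^ 2 * μ.re := by
    have h3 : (m : ℝ) ^ 2 - 2 * |(m : ℝ)| ≤ ((m : ℝ) + p) ^ 2 := by
      have : -(|(m : ℝ)|) ≤ m * p := by
        have : |(m : ℝ) * p| ≤ |(m : ℝ)| := by
          rw [abs_mul]; exact mul_le_of_le_one_right (abs_nonneg _) hp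
        linarith [neg_abs_le ((m : ℝ) * p)]
      nlinarith [sq_nonneg p]
    have h4 : ((m : ℝ) + p) ^ 2 * T ≤ ((m : ℝ) + p) ^ 2 * μ.re := by gcongr
    nlinarith
  refine mul_le_mul h1 (Real.exp_le_exp.2 ?_) (Real.exp_pos _).le (by positivity)
  nlinarith [Real.pi_pos]

lemma hasDerivAt_thetaD (n : ℕ) (p q : ℝ) (hp : |p| ≤ 1) (μ : ℂ) (hμ : 0 < μ.re) :
    HasDerivAt (thetaD n p q) (thetaD (n + 1) p q μ) μ := by
  have hT : 0 < μ.re / 2 := by linarith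
  have hT' : μ.re / 2 < μ.re := by linarith
  have key := hasDerivAt_tsum_of_isPreconnected (𝕜 := ℂ) (F := ℂ) (y₀ := μ) (y := μ)
    (t := {z : ℂ | μ.re / 2 < z.re})
    (u := fun m => Real.pi * thetaBound (2 * (n + 1)) (μ.re / 2) m)
    (g := fun (m : ℤ) z => ((m : ℂ) + p) ^ (2 * n) *
      Complex.exp (-(Real.pi : ℂ) * ((m : ℂ) + p) ^ 2 * z +
        2 * (Real.pi : ℂ) * Complex.I * ((m : ℂ) + p) * q))
    (g' := fun (m : ℤ) z => -(Real.pi : ℂ) * (((m : ℂ) + p) ^ (2 * (n + 1)) *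
      Complex.exp (-(Real.pi : ℂ) * ((m : ℂ) + p) ^ 2 * z +
        2 * (Real.pi : ℂ) * Complex.I * ((m : ℂ) + p) * q)))
    ((summable_thetaBound _ hT).mul_left _)
    (isOpen_lt continuous_const Complex.continuous_re)
    ((convex_halfSpace_re_gt _).isPreconnected)
    (by
      intro m z _
      have h := ((((hasDerivAt_id z).const_mul (-(Real.pi : ℂ) * ((m : ℂ) + p) ^ 2)).add_const
        (2 * (Real.pi : ℂ) * Complex.I * ((m : ℂ) + p) * q)).cexp).const_mul
        (((m : ℂ) + p) ^ (2 * n))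
      refine h.congr_deriv ?_
      simp only [id]
      ring)
    (by
      intro m z hz
      rw [norm_mul, norm_neg, Complex.norm_real, Real.norm_eq_abs, abs_of_pos Real.pi_pos]
      exact mul_le_mul_of_nonneg_left (term_le _ hT p q hp m z hz) Real.pi_pos.le)
    hT'
    (Summable.of_norm_bounded (summable_thetaBound (2 * n) hT)
      (fun m => term_le _ hT p q hp m μ hT'))
    hT'
  have key2 := key.const_mul ((-(Real.pi : ℂ)) ^ n)
  unfold thetaD
  refine key2.congr_deriv ?_
  rw [tsum_mul_left, pow_succ]
  ring

lemma Ccoef_zero_succ (n : ℕ) : Ccoef 0 (2 * (n + 1)) = -Ccoef 0 (2 * n) := by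
  unfold Ccoef
  have h1 : ((2 * n).factorial : ℂ) ≠ 0 := by exact_mod_cast Nat.factorial_ne_zero _
  have h2 : ((2 * (n + 1)).factorial : ℂ) ≠ 0 := by exact_mod_cast Nat.factorial_ne_zero _
  simp only [mul_zero, Nat.sub_zero, pow_zero, Nat.factorial_zero, Nat.cast_one, mul_one, one_mul]
  rw [mul_div_cancel_right₀ _ h1, mul_div_cancel_right₀ _ h2, mul_add, pow_add]
  simp

lemma Ccoef_last (n : ℕ) :
    Ccoef (n + 1) (2 * (n + 1)) = -((n : ℂ) + 1 / 2) * Ccoef n (2 * n) := by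
  unfold Ccoef
  have h1 : ((n).factorial : ℂ) ≠ 0 := by exact_mod_cast Nat.factorial_ne_zero _
  have h2 : (n : ℂ) + 1 ≠ 0 := Nat.cast_add_one_ne_zero n
  have h4 : (-Complex.I) ^ (2 * n + 2) = -(-Complex.I) ^ (2 * n) := by
    rw [pow_add]; simp
  rw [show 2 * (n + 1) = 2 * n + 1 + 1 by ring, Nat.factorial_succ, Nat.factorial_succ,
    Nat.factorial_succ n, h4]
  simp only [Nat.sub_self, Nat.factorial_zero]
  push_cast
  field_simp
  ring

lemma Ccoef_mid (n j : ℕ) (hj : j < n) :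
    Ccoef (j + 1) (2 * (n + 1)) =
      -Ccoef (j + 1) (2 * n) - (2 * (n : ℂ) + 1 / 2 - j) * Ccoef j (2 * n) := by
  obtain ⟨k, rfl⟩ : ∃ k, n = j + 1 + k := ⟨n - (j + 1), by omega⟩
  unfold Ccoef
  have h1 : ((j).factorial : ℂ) ≠ 0 := by exact_mod_cast Nat.factorial_ne_zero _
  have h1' : ((2 * k).factorial : ℂ) ≠ 0 := by exact_mod_cast Nat.factorial_ne_zero _
  have h2 : (j : ℂ) + 1 ≠ 0 := Nat.cast_add_one_ne_zero j
  have h2' : 2 * (k : ℂ) + 1 ≠ 0 := by exact_mod_cast Nat.succ_ne_zero (2 * k)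
  have h2'' : 2 * (k : ℂ) + 1 + 1 ≠ 0 := by exact_mod_cast Nat.succ_ne_zero (2 * k + 1)
  have h4 : (-Complex.I) ^ (2 * (j + 1 + k) + 1 + 1) = -(-Complex.I) ^ (2 * (j + 1 + k)) := by
    rw [pow_succ, pow_succ, mul_assoc]; simp
  rw [show 2 * (j + 1 + k + 1) = 2 * (j + 1 + k) + 1 + 1 by ring, h4,
    Nat.factorial_succ (2 * (j + 1 + k) + 1), Nat.factorial_succ (2 * (j + 1 + k)),
    show 2 * (j + 1 + k) + 1 + 1 - 2 * (j + 1) = 2 * k + 1 + 1 by omega,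
    show 2 * (j + 1 + k) - 2 * (j + 1) = 2 * k by omega,
    show 2 * (j + 1 + k) - 2 * j = 2 * k + 1 + 1 by omega,
    Nat.factorial_succ (2 * k + 1), Nat.factorial_succ (2 * k), Nat.factorial_succ j]
  push_cast
  field_simp
  ring

lemma inversion_step (p q p' q' : ℝ) (hp : |p| ≤ 1) (hp' : |p'| ≤ 1)
    (h0 : ∀ μ : ℂ, 0 < μ.re → thetaD 0 p q (1 / μ) = μ ^ (1 / 2 : ℂ) * thetaD 0 p' q' μ)
    (n : ℕ) : ∀ μ : ℂ, 0 < μ.re → thetaD n p q (1 / μ) = ∑ j ∈ Finset.range (n + 1),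
          Ccoef j (2 * n) * μ ^ (2 * (n : ℂ) + 1 / 2 - (j : ℂ)) * thetaD (n - j) p' q' μ := by
  induction n with
  | zero =>
    intro μ hμ
    rw [h0 μ hμ]
    simp [Ccoef]
  | succ n ih =>
    intro μ hμ
    have hμ0 : μ ≠ 0 := by rintro rfl; simp at hμ
    have hinv : 0 < (μ⁻¹).re := by
      rw [Complex.inv_re]; exact div_pos hμ (Complex.normSq_pos.2 hμ0)
    have hL : HasDerivAt (fun z => thetaD n p q (1 / z))
        (thetaD (n + 1) p q (1 / μ) * (-(μ ^ 2)⁻¹)) μ := by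
      simp only [one_div]
      exact (hasDerivAt_thetaD n p q hp μ⁻¹ hinv).comp μ (hasDerivAt_inv hμ0)
    have hR : HasDerivAt (fun z : ℂ => ∑ j ∈ Finset.range (n + 1),
          Ccoef j (2 * n) * z ^ (2 * (n : ℂ) + 1 / 2 - (j : ℂ)) * thetaD (n - j) p' q' z)
        (∑ j ∈ Finset.range (n + 1),
          (Ccoef j (2 * n) * ((2 * (n : ℂ) + 1 / 2 - (j : ℂ)) *
            μ ^ (2 * (n : ℂ) + 1 / 2 - (j : ℂ) - 1)) * thetaD (n - j) p' q' μ +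
          Ccoef j (2 * n) * μ ^ (2 * (n : ℂ) + 1 / 2 - (j : ℂ)) *
            thetaD (n - j + 1) p' q' μ)) μ := by
      refine HasDerivAt.fun_sum fun j _ => ?_
      have hc := ((hasDerivAt_id μ).cpow_const (c := 2 * (n : ℂ) + 1 / 2 - (j : ℂ))
        (Or.inl hμ)).const_mul (Ccoef j (2 * n))
      simp only [id, mul_one] at hc
      exact hc.mul (hasDerivAt_thetaD (n - j) p' q' hp' μ hμ)
    have hev : (fun z => thetaD n p q (1 / z)) =ᶠ[nhds μ] (fun z : ℂ => ∑ j ∈ Finset.range (n + 1),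
          Ccoef j (2 * n) * z ^ (2 * (n : ℂ) + 1 / 2 - (j : ℂ)) * thetaD (n - j) p' q' z) := by
      filter_upwards [(isOpen_lt continuous_const Complex.continuous_re).mem_nhds hμ] with z hz
      exact ih z hz
    have heq := hL.unique (hR.congr_of_eventuallyEq hev)
    have hmain : thetaD (n + 1) p q (1 / μ) = ∑ j ∈ Finset.range (n + 1),
        (-(2 * (n : ℂ) + 1 / 2 - j) * Ccoef j (2 * n) *
            μ ^ (2 * (n : ℂ) + 1 / 2 - j + 1) * thetaD (n - j) p' q' μ) +
        ∑ j ∈ Finset.range (n + 1), (-Ccoef j (2 * n) *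
            μ ^ (2 * (n : ℂ) + 1 / 2 - j + 2) * thetaD (n - j + 1) p' q' μ) := by
      have : thetaD (n + 1) p q (1 / μ) =
          (-μ ^ 2) * (thetaD (n + 1) p q (1 / μ) * (-(μ ^ 2)⁻¹)) := by field_simp
      rw [this, heq, Finset.mul_sum, ← Finset.sum_add_distrib]
      refine Finset.sum_congr rfl fun j _ => ?_
      rw [Complex.cpow_sub _ _ hμ0, Complex.cpow_add _ 1 hμ0, Complex.cpow_add _ 2 hμ0,
        Complex.cpow_one, show (μ ^ (2 : ℂ)) = μ ^ 2 by exact_mod_cast Complex.cpow_natCast μ 2]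
      field_simp
      ring
    rw [hmain, Finset.sum_range_succ, Finset.sum_range_succ' _ n, Finset.sum_range_succ _ (n + 1),
      Finset.sum_range_succ' _ n, Ccoef_last, Ccoef_zero_succ]
    have hs : ∑ j ∈ Finset.range n,
        Ccoef (j + 1) (2 * (n + 1)) * μ ^ (2 * ((n + 1 : ℕ) : ℂ) + 1 / 2 - ((j + 1 : ℕ) : ℂ)) *
            thetaD (n + 1 - (j + 1)) p' q' μ =
        ∑ j ∈ Finset.range n, (-(2 * (n : ℂ) + 1 / 2 - j) * Ccoef j (2 * n) *
            μ ^ (2 * (n : ℂ) + 1 / 2 - j + 1) * thetaD (n - j) p' q' μ) +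
        ∑ j ∈ Finset.range n, (-Ccoef (j + 1) (2 * n) *
            μ ^ (2 * (n : ℂ) + 1 / 2 - ((j + 1 : ℕ) : ℂ) + 2) *
              thetaD (n - (j + 1) + 1) p' q' μ) := by
      rw [← Finset.sum_add_distrib]
      refine Finset.sum_congr rfl fun j hj => ?_
      have hj' := Finset.mem_range.1 hj
      rw [Ccoef_mid n j hj', show n + 1 - (j + 1) = n - j by omega,
        show n - (j + 1) + 1 = n - j by omega,
        show 2 * ((n + 1 : ℕ) : ℂ) + 1 / 2 - ((j + 1 : ℕ) : ℂ) = 2 * (n : ℂ) + 1 / 2 - j + 1 by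
          push_cast; ring,
        show 2 * (n : ℂ) + 1 / 2 - ((j + 1 : ℕ) : ℂ) + 2 = 2 * (n : ℂ) + 1 / 2 - j + 1 by
          push_cast; ring]
      ring
    rw [hs, show 2 * ((n + 1 : ℕ) : ℂ) + 1 / 2 - ((n + 1 : ℕ) : ℂ) = 2 * (n : ℂ) + 1 / 2 - n + 1 by
          push_cast; ring,
        show 2 * ((n + 1 : ℕ) : ℂ) + 1 / 2 - ((0 : ℕ) : ℂ) =
          2 * (n : ℂ) + 1 / 2 - ((0 : ℕ) : ℂ) + 2 by push_cast; ring]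
    simp only [Nat.sub_self, Nat.sub_zero]
    ring

lemma thetaD_zero_eq (q μ : ℂ) : thetaD 0 0 q μ = jacobiTheta₂ q (Complex.I * μ) := by
  unfold thetaD jacobiTheta₂ jacobiTheta₂_term
  simp only [pow_zero, one_mul, mul_zero, add_zero]
  refine tsum_congr fun m => congrArg Complex.exp ?_
  linear_combination (-(Real.pi : ℂ) * m ^ 2 * μ) * Complex.I_sq

lemma thetaD_half_eq (μ : ℂ) : thetaD 0 (1 / 2) 0 μ =
    Complex.exp (-Real.pi * μ / 4) * jacobiTheta₂ (Complex.I * μ / 2) (Complex.I * μ) := by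
  unfold thetaD jacobiTheta₂ jacobiTheta₂_term
  simp only [pow_zero, one_mul, mul_zero, add_zero]
  rw [← tsum_mul_left]
  refine tsum_congr fun m => ?_
  rw [← Complex.exp_add]
  refine congrArg Complex.exp ?_
  linear_combination (-(Real.pi : ℂ) * (m ^ 2 + m) * μ) * Complex.I_sq

lemma func_eq (z μ : ℂ) (hμ : 0 < μ.re) : jacobiTheta₂ z (Complex.I * (1 / μ)) =
    μ ^ (1 / 2 : ℂ) * Complex.exp (-Real.pi * z ^ 2 * μ) *
      jacobiTheta₂ (Complex.I * (z * μ)) (Complex.I * μ) := by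
  have hμ0 : μ ≠ 0 := by rintro rfl; simp at hμ
  have harg : μ.arg ≠ Real.pi := by
    intro h
    rw [Complex.arg_eq_pi_iff] at h
    linarith [h.1]
  rw [jacobiTheta₂_functional_equation]
  have e1 : -Complex.I * (Complex.I * (1 / μ)) = μ⁻¹ := by
    linear_combination (-(1 / μ)) * Complex.I_sq
  have e2 : z / (Complex.I * (1 / μ)) = -(Complex.I * (z * μ)) := by
    field_simp
    rw [Complex.I_sq]; ring
  have e3 : -1 / (Complex.I * (1 / μ)) = Complex.I * μ := by
    field_simp
    rw [Complex.I_sq]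
  have e4 : -Real.pi * Complex.I * z ^ 2 / (Complex.I * (1 / μ)) = -Real.pi * z ^ 2 * μ := by
    field_simp
  rw [e1, e2, e3, e4, jacobiTheta₂_neg_left, Complex.inv_cpow _ _ harg, one_div, inv_inv]

lemma exp_int_even (k : ℤ) (h : Even k) : Complex.exp (Real.pi * Complex.I * k) = 1 := by
  obtain ⟨r, rfl⟩ := h
  rw [Complex.exp_eq_one_iff]
  exact ⟨r, by push_cast; ring⟩

lemma exp_eq_of_even (k : ℤ) (h : Even k) (a b : ℂ) (hab : a = b + Real.pi * Complex.I * k) :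
    Complex.exp a = Complex.exp b := by
  rw [hab, Complex.exp_add, exp_int_even k h, mul_one]

/-- Lemma 5.4: modular transformation properties of `θ₂ = θ[1/2,0]`, `θ₃ = θ[0,0]`,
`θ₄ = θ[0,1/2]` and their μ-derivatives under `iμ ↦ iμ+1` and `iμ ↦ i/μ`. -/
theorem statement4 (μ : ℂ) (hμ : 0 < μ.re) (n : ℕ) :
    thetaD n (1 / 2) 0 (μ - Complex.I) =
        Complex.exp ((Real.pi : ℂ) * Complex.I / 4) * thetaD n (1 / 2) 0 μ ∧
    thetaD n 0 0 (μ - Complex.I) = thetaD n 0 (1 / 2) μ ∧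
    thetaD n 0 (1 / 2) (μ - Complex.I) = thetaD n 0 0 μ ∧
    thetaD n (1 / 2) 0 (1 / μ) =
        ∑ j ∈ Finset.range (n + 1),
          Ccoef j (2 * n) * μ ^ (2 * (n : ℂ) + 1 / 2 - (j : ℂ)) *
            thetaD (n - j) 0 (1 / 2) μ ∧
    thetaD n 0 0 (1 / μ) =
        ∑ j ∈ Finset.range (n + 1),
          Ccoef j (2 * n) * μ ^ (2 * (n : ℂ) + 1 / 2 - (j : ℂ)) *
            thetaD (n - j) 0 0 μ ∧
    thetaD n 0 (1 / 2) (1 / μ) =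
        ∑ j ∈ Finset.range (n + 1),
          Ccoef j (2 * n) * μ ^ (2 * (n : ℂ) + 1 / 2 - (j : ℂ)) *
            thetaD (n - j) (1 / 2) 0 μ := by
  have h2 : |(1 / 2 : ℝ)| ≤ 1 := by norm_num [abs_le]
  have h0 : |(0 : ℝ)| ≤ 1 := by norm_num
  refine ⟨?_, ?_, ?_, ?_, ?_, ?_⟩
  · unfold thetaD
    rw [mul_left_comm, ← tsum_mul_left (a := Complex.exp ((Real.pi : ℂ) * Complex.I / 4))]
    congr 1
    refine tsum_congr fun m => ?_
    rw [mul_left_comm, ← Complex.exp_add]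
    congr 1
    refine exp_eq_of_even (m * (m + 1)) (Int.even_mul_succ_self m) _ _ ?_
    push_cast
    ring
  · unfold thetaD
    congr 1
    refine tsum_congr fun m => ?_
    congr 1
    refine exp_eq_of_even (m * (m - 1)) (Int.even_mul_pred_self m) _ _ ?_
    push_cast
    ring
  · unfold thetaD
    congr 1
    refine tsum_congr fun m => ?_
    congr 1
    refine exp_eq_of_even (m * (m + 1)) (Int.even_mul_succ_self m) _ _ ?_
    push_cast
    ring
  · have := inversion_step (1 / 2) 0 0 (1 / 2) h2 h0 ?_ n μ hμ
    · simpa using this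
    · intro ν hν
      have hν0 : ν ≠ 0 := by rintro rfl; simp at hν
      have a := thetaD_half_eq (1 / ν)
      have b := thetaD_zero_eq (1 / 2) ν
      push_cast
      rw [a, b, func_eq _ _ hν]
      have e1 : Complex.I * (Complex.I * (1 / ν) / 2 * ν) = -(1 / 2) := by
        field_simp
        rw [Complex.I_sq]
      have e2 : -Real.pi * (Complex.I * (1 / ν) / 2) ^ 2 * ν = -(-Real.pi * (1 / ν) / 4) := by
        field_simp
        rw [Complex.I_sq]; ring
      rw [e1, e2, jacobiTheta₂_neg_left, Complex.exp_neg]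
      field_simp [Complex.exp_ne_zero]
  · have := inversion_step 0 0 0 0 h0 h0 ?_ n μ hμ
    · simpa using this
    · intro ν hν
      push_cast
      rw [thetaD_zero_eq, thetaD_zero_eq, func_eq _ _ hν]
      simp
  · have := inversion_step 0 (1 / 2) (1 / 2) 0 h0 h2 ?_ n μ hμ
    · simpa using this
    · intro ν hν
      push_cast
      rw [thetaD_zero_eq, thetaD_half_eq, func_eq _ _ hν, mul_assoc]
      have e1 : Complex.I * (1 / 2 * ν) = Complex.I * ν / 2 := by ring
      have e2 : -Real.pi * (1 / 2) ^ 2 * ν = -Real.pi * ν / 4 := by ring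
      rw [e1, e2]

end
end

section
/- Let p, q ∈ ℂ and μ ∈ ℂ with Re μ > 0, and assume θ[p,q](iν) ≠ 0 for every ν with Re ν > 0. Then: w₁[p,q](i/μ) = μ² w₃[−q,p](iμ); w₁'[p,q](i/μ) = −μ⁴ w₃'[−q,p](iμ) − 2μ³ w₃[−q,p](iμ); w₁''[p,q](i/μ) = μ⁶ w₃''[−q,p](iμ) + 6μ⁵ w₃'[−q,p](iμ) + 6μ⁴ w₃[−q,p](iμ); w₁⁽³⁾[p,q](i/μ) = −μ⁸ w₃⁽³⁾[−q,p](iμ) − 12μ⁷ w₃''[−q,p](iμ) − 36μ⁶ w₃'[−q,p](iμ) − 24μ⁵ w₃[−q,p](iμ); w₁⁽⁴⁾[p,q](i/μ) = μ¹⁰ w₃⁽⁴⁾[−q,p](iμ) + 20μ⁹ w₃⁽³⁾[−q,p](iμ) + 120μ⁸ w₃''[−q,p](iμ) + 240μ⁷ w₃'[−q,p](iμ) + 120μ⁶ w₃[−q,p](iμ). -/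
noncomputable section

open Complex in
lemma theta_eq (p q μ : ℂ) : theta p q μ =
    cexp (-(Real.pi : ℂ) * p ^ 2 * μ + 2 * (Real.pi : ℂ) * I * p * q) *
      jacobiTheta₂ (q + I * p * μ) (I * μ) := by
  unfold theta jacobiTheta₂ jacobiTheta₂_term
  rw [← tsum_mul_left]
  refine tsum_congr fun n => ?_
  rw [← Complex.exp_add]
  congr 1
  linear_combination (-(2 * Real.pi * n * p * μ) - Real.pi * n ^ 2 * μ : ℂ) * I_sq

open Complex in
lemma thetaQ_eq (p q μ : ℂ) (hμ : 0 < μ.re) : thetaQ p q μ =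
    cexp (-(Real.pi : ℂ) * p ^ 2 * μ + 2 * (Real.pi : ℂ) * I * p * q) *
      (jacobiTheta₂' (q + I * p * μ) (I * μ) +
        2 * Real.pi * I * p * jacobiTheta₂ (q + I * p * μ) (I * μ)) := by
  have him : 0 < (I * μ).im := by simpa using hμ
  have h1 := (hasSum_jacobiTheta₂'_term (q + I * p * μ) him).add
    ((hasSum_jacobiTheta₂_term (q + I * p * μ) him).mul_left (2 * Real.pi * I * p))
  rw [← h1.tsum_eq, ← tsum_mul_left, thetaQ, ← tsum_mul_left]
  refine tsum_congr fun n => ?_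
  unfold jacobiTheta₂'_term jacobiTheta₂_term
  have : cexp (-(Real.pi : ℂ) * ((n : ℂ) + p) ^ 2 * μ + 2 * (Real.pi : ℂ) * I * ((n : ℂ) + p) * q)
      = cexp (-(Real.pi : ℂ) * p ^ 2 * μ + 2 * (Real.pi : ℂ) * I * p * q) *
        cexp (2 * Real.pi * I * n * (q + I * p * μ) + Real.pi * I * n ^ 2 * (I * μ)) := by
    rw [← Complex.exp_add]
    congr 1
    linear_combination (-(2 * Real.pi * n * p * μ) - Real.pi * n ^ 2 * μ : ℂ) * I_sq
  rw [this]
  ring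

lemma theta_shift (p q μ : ℂ) : theta (p + 1) q μ = theta p q μ := by
  unfold theta
  rw [← (Equiv.addRight (1 : ℤ)).tsum_eq (fun m : ℤ => Complex.exp (-(Real.pi : ℂ) * ((m : ℂ) + p) ^ 2 * μ +
    2 * (Real.pi : ℂ) * Complex.I * ((m : ℂ) + p) * q))]
  refine tsum_congr fun n => ?_
  simp only [Equiv.coe_addRight, Int.cast_add, Int.cast_one]
  congr 1
  ring

lemma thetaQ_shift (p q μ : ℂ) : thetaQ (p + 1) q μ = thetaQ p q μ := by
  unfold thetaQ
  rw [← (Equiv.addRight (1 : ℤ)).tsum_eq (fun m : ℤ => ((m : ℂ) + p) * Complex.exp (-(Real.pi : ℂ) * ((m : ℂ) + p) ^ 2 * μ +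
    2 * (Real.pi : ℂ) * Complex.I * ((m : ℂ) + p) * q))]
  congr 1
  refine tsum_congr fun n => ?_
  simp only [Equiv.coe_addRight, Int.cast_add, Int.cast_one]
  rw [show (n : ℂ) + (p + 1) = n + 1 + p by ring]

open Complex in
lemma exp_factor (p q μ : ℂ) (h0 : μ ≠ 0) :
    cexp (-(Real.pi : ℂ) * (-q) ^ 2 * μ + 2 * (Real.pi : ℂ) * I * (-q) * p) *
      cexp (-Real.pi * I * (p + I * (-q) * μ) ^ 2 / (I * μ)) *
      cexp (2 * Real.pi * I * p * q) =
    cexp (-(Real.pi : ℂ) * p ^ 2 * (1 / μ) + 2 * (Real.pi : ℂ) * I * p * q) := by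
  rw [← Complex.exp_add, ← Complex.exp_add]
  congr 1
  have hI := I_ne_zero
  field_simp
  linear_combination (-(q ^ 2 * μ ^ 2) : ℂ) * I_sq

open Complex in
lemma arg_div (p q μ : ℂ) (h0 : μ ≠ 0) :
    (p + I * (-q) * μ) / (I * μ) = -(q + I * p * (1 / μ)) := by
  have hI := I_ne_zero
  field_simp
  linear_combination (p : ℂ) * I_sq

open Complex in
lemma arg_div' (μ : ℂ) (h0 : μ ≠ 0) : -1 / (I * μ) = I * (1 / μ) := by
  have hI := I_ne_zero
  field_simp
  simp

open Complex in
lemma theta_inv (p q μ : ℂ) (h0 : μ ≠ 0) :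
    theta p q (1 / μ) = μ ^ (1 / 2 : ℂ) * cexp (2 * Real.pi * I * p * q) * theta (-q) p μ := by
  have hs : μ ^ (1 / 2 : ℂ) ≠ 0 := by simp [Complex.cpow_eq_zero_iff, h0]
  rw [theta_eq, theta_eq, jacobiTheta₂_functional_equation (p + I * (-q) * μ) (I * μ),
    arg_div p q μ h0, arg_div' μ h0, jacobiTheta₂_neg_left, ← exp_factor p q μ h0,
    show -I * (I * μ) = μ by linear_combination (-μ) * I_sq]
  field_simp

open Complex in
lemma thetaQ_inv (p q μ : ℂ) (hμ : 0 < μ.re) :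
    thetaQ p q (1 / μ) =
      -I * μ * μ ^ (1 / 2 : ℂ) * cexp (2 * Real.pi * I * p * q) * thetaQ (-q) p μ := by
  have h0 : μ ≠ 0 := by rintro rfl; simp at hμ
  have hμ' : 0 < (1 / μ).re := by
    rw [one_div, Complex.inv_re]; exact div_pos hμ (Complex.normSq_pos.mpr h0)
  have hs : μ ^ (1 / 2 : ℂ) ≠ 0 := by simp [Complex.cpow_eq_zero_iff, h0]
  have hI := I_ne_zero
  rw [thetaQ_eq _ _ _ hμ', thetaQ_eq _ _ _ hμ,
    jacobiTheta₂'_functional_equation (p + I * (-q) * μ) (I * μ),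
    jacobiTheta₂_functional_equation (p + I * (-q) * μ) (I * μ),
    arg_div p q μ h0, arg_div' μ h0, jacobiTheta₂_neg_left, jacobiTheta₂'_neg_left,
    ← exp_factor p q μ h0,
    show -I * (I * μ) = μ by linear_combination (-μ) * I_sq]
  generalize jacobiTheta₂ _ _ = A
  generalize jacobiTheta₂' _ _ = B
  generalize cexp _ = e1
  generalize cexp _ = e2
  generalize cexp _ = e3
  generalize μ ^ (1 / 2 : ℂ) = s at *
  field_simp
  ring

lemma w1_inv (p q μ : ℂ) (hμ : 0 < μ.re) : w1 p q (1 / μ) = μ ^ 2 * w3 (-q) p μ := by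
  have h0 : μ ≠ 0 := by rintro rfl; simp at hμ
  have hs : μ ^ (1 / 2 : ℂ) ≠ 0 := by simp [Complex.cpow_eq_zero_iff, h0]
  have hss : μ ^ (1 / 2 : ℂ) * μ ^ (1 / 2 : ℂ) = μ := by
    rw [← Complex.cpow_add _ _ h0]; norm_num
  have e1 : theta (-(1 / 2)) 0 μ = theta (1 / 2) 0 μ := by
    rw [← theta_shift]; norm_num
  have e2 : thetaQ (-(q + 1 / 2)) p μ = thetaQ (-q + 1 / 2) p μ := by
    rw [← thetaQ_shift]; congr 1; ring
  have e3 : Complex.exp (2 * Real.pi * Complex.I * p * (q + 1 / 2)) =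
      Complex.exp (Real.pi * Complex.I * p) * Complex.exp (2 * Real.pi * Complex.I * p * q) := by
    rw [← Complex.exp_add]; congr 1; ring
  unfold w1 w3
  rw [theta_inv 0 0 μ h0, theta_inv 0 (1 / 2) μ h0, theta_inv p q μ h0,
    thetaQ_inv p (q + 1 / 2) μ hμ, e1, e2, e3]
  have hx := Complex.exp_ne_zero (Real.pi * Complex.I * p)
  have hy := Complex.exp_ne_zero (2 * Real.pi * Complex.I * p * q)
  simp only [neg_zero, mul_zero, zero_mul, Complex.exp_zero, mul_one]
  generalize Complex.exp _ = x at *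
  generalize Complex.exp _ = y at *
  generalize μ ^ (1 / 2 : ℂ) = s at *
  by_cases ht : theta (-q) p μ = 0
  · simp [ht]
  generalize thetaQ (-q + 1 / 2) p μ = D at *
  field_simp
  linear_combination (-1 : ℂ) * (theta 0 0 μ * theta (1 / 2) 0 μ * D) * hss
    + (theta 0 0 μ * theta (1 / 2) 0 μ * D * s ^ 2) * Complex.I_sq

open Complex in
lemma theta_diff (p q μ : ℂ) (hμ : 0 < μ.re) : DifferentiableAt ℂ (theta p q) μ := by
  have him : 0 < (I * μ).im := by simpa using hμ
  have h : DifferentiableAt ℂ (fun ν : ℂ => jacobiTheta₂ (q + I * p * ν) (I * ν)) μ := by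
    have h1 := (hasFDerivAt_jacobiTheta₂ (q + I * p * μ) him).differentiableAt
    have h2 : DifferentiableAt ℂ (fun ν : ℂ => ((q + I * p * ν, I * ν) : ℂ × ℂ)) μ := by fun_prop
    exact DifferentiableAt.comp (g := fun x : ℂ × ℂ => jacobiTheta₂ x.1 x.2) μ h1 h2
  rw [show theta p q = fun ν => _ from funext (theta_eq p q)]
  exact DifferentiableAt.mul (by fun_prop) h

open Complex in
lemma jac'_diff (p q μ : ℂ) (hμ : 0 < μ.re) :
    DifferentiableAt ℂ (fun ν : ℂ => jacobiTheta₂' (q + I * p * ν) (I * ν)) μ := by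
  set S : ℝ := |(q + I * p * μ).im| + 1
  set T : ℝ := μ.re / 2
  have hT : 0 < T := by positivity
  set U : Set ℂ := {ν | |(q + I * p * ν).im| < S} ∩ {ν | T < (I * ν).im}
  have hU : IsOpen U := by
    apply IsOpen.inter
    · exact isOpen_lt (by fun_prop) (by fun_prop)
    · exact isOpen_lt (by fun_prop) (by fun_prop)
  have hμU : μ ∈ U := by
    refine ⟨by simp only [Set.mem_ofPred_eq, S]; linarith, ?_⟩
    simp only [Set.mem_ofPred_eq, T, I_mul_im]; linarith
  have hsum := (summable_pow_mul_jacobiTheta₂_term_bound S hT 1).mul_left (2 * Real.pi)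
  have := differentiableOn_tsum_of_summable_norm
    (F := fun (n : ℤ) (ν : ℂ) => jacobiTheta₂'_term n (q + I * p * ν) (I * ν)) hsum
    (U := U) (fun n => by unfold jacobiTheta₂'_term jacobiTheta₂_term; fun_prop) hU
    (fun n ν hν => by
      refine (norm_jacobiTheta₂'_term_le hT hν.1.le hν.2.le n).trans (le_of_eq ?_)
      push_cast
      ring)
  exact this.differentiableAt (hU.mem_nhds hμU)

open Complex in
lemma thetaQ_diff (p q μ : ℂ) (hμ : 0 < μ.re) : DifferentiableAt ℂ (thetaQ p q) μ := by
  have him : 0 < (I * μ).im := by simpa using hμ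
  have h : DifferentiableAt ℂ (fun ν : ℂ => jacobiTheta₂ (q + I * p * ν) (I * ν)) μ := by
    have h1 := (hasFDerivAt_jacobiTheta₂ (q + I * p * μ) him).differentiableAt
    have h2 : DifferentiableAt ℂ (fun ν : ℂ => ((q + I * p * ν, I * ν) : ℂ × ℂ)) μ := by fun_prop
    exact DifferentiableAt.comp (g := fun x : ℂ × ℂ => jacobiTheta₂ x.1 x.2) μ h1 h2
  have hopen : IsOpen {ν : ℂ | 0 < ν.re} := isOpen_lt (by fun_prop) (by fun_prop)
  have heq : thetaQ p q =ᶠ[nhds μ] _ :=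
    Filter.eventuallyEq_of_mem (hopen.mem_nhds hμ) (fun ν hν => thetaQ_eq p q ν hν)
  refine DifferentiableAt.congr_of_eventuallyEq ?_ heq
  exact DifferentiableAt.mul (by fun_prop) ((jac'_diff p q μ hμ).add (h.const_mul _))

lemma deriv_inv_step (A B B' : ℂ → ℂ) (h : ∀ μ : ℂ, 0 < μ.re → A (1 / μ) = B μ)
    (hB : ∀ μ : ℂ, 0 < μ.re → HasDerivAt B (B' μ) μ) (μ : ℂ) (hμ : 0 < μ.re) :
    deriv A (1 / μ) = -μ ^ 2 * B' μ := by
  have hinv : ∀ ν : ℂ, 0 < ν.re → 0 < (1 / ν).re := fun ν hν => by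
    have h0 : ν ≠ 0 := by rintro rfl; simp at hν
    rw [one_div, Complex.inv_re]; exact div_pos hν (Complex.normSq_pos.mpr h0)
  have h0 : μ ≠ 0 := by rintro rfl; simp at hμ
  have hopen : IsOpen {ν : ℂ | 0 < ν.re} := isOpen_lt (by fun_prop) (by fun_prop)
  have heq : A =ᶠ[nhds (1 / μ)] fun ν => B (ν⁻¹) :=
    Filter.eventuallyEq_of_mem (hopen.mem_nhds (hinv μ hμ)) (fun ν hν => by
      have := h (1 / ν) (hinv ν hν)
      simpa using this)
  rw [heq.deriv_eq]
  have h1 := hasDerivAt_inv (one_div_ne_zero h0)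
  have h2 : HasDerivAt B (B' μ) ((1 / μ)⁻¹) := by simpa using hB μ hμ
  have h3 : HasDerivAt (fun ν => B (ν⁻¹)) (B' μ * -((1 / μ) ^ 2)⁻¹) (1 / μ) := h2.comp (1 / μ) h1
  rw [h3.deriv]
  field_simp

/-- Lemma 5.6: behavior of `w₁[p,q]` and its μ-derivatives up to order 4 under
`iμ ↦ i/μ`, expressed through `w₃[−q,p]`. -/
theorem statement6 (p q μ : ℂ) (hμ : 0 < μ.re)
    (hθ : ∀ ν : ℂ, 0 < ν.re → theta p q ν ≠ 0) :
    w1 p q (1 / μ) = μ ^ 2 * w3 (-q) p μ ∧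
    iteratedDeriv 1 (w1 p q) (1 / μ) =
        -μ ^ 4 * iteratedDeriv 1 (w3 (-q) p) μ - 2 * μ ^ 3 * w3 (-q) p μ ∧
    iteratedDeriv 2 (w1 p q) (1 / μ) =
        μ ^ 6 * iteratedDeriv 2 (w3 (-q) p) μ + 6 * μ ^ 5 * iteratedDeriv 1 (w3 (-q) p) μ +
          6 * μ ^ 4 * w3 (-q) p μ ∧
    iteratedDeriv 3 (w1 p q) (1 / μ) =
        -μ ^ 8 * iteratedDeriv 3 (w3 (-q) p) μ - 12 * μ ^ 7 * iteratedDeriv 2 (w3 (-q) p) μ -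
          36 * μ ^ 6 * iteratedDeriv 1 (w3 (-q) p) μ - 24 * μ ^ 5 * w3 (-q) p μ ∧
    iteratedDeriv 4 (w1 p q) (1 / μ) =
        μ ^ 10 * iteratedDeriv 4 (w3 (-q) p) μ + 20 * μ ^ 9 * iteratedDeriv 3 (w3 (-q) p) μ +
          120 * μ ^ 8 * iteratedDeriv 2 (w3 (-q) p) μ +
          240 * μ ^ 7 * iteratedDeriv 1 (w3 (-q) p) μ + 120 * μ ^ 6 * w3 (-q) p μ := by
  have hinv : ∀ ν : ℂ, 0 < ν.re → 0 < (1 / ν).re := fun ν hν => by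
    have h0 : ν ≠ 0 := by rintro rfl; simp at hν
    rw [one_div, Complex.inv_re]; exact div_pos hν (Complex.normSq_pos.mpr h0)
  have hne : ∀ ν : ℂ, 0 < ν.re → theta (-q) p ν ≠ 0 := fun ν hν hz => by
    have h0 : ν ≠ 0 := by rintro rfl; simp at hν
    apply hθ (1 / ν) (hinv ν hν)
    rw [theta_inv p q ν h0, hz, mul_zero]
  set g : ℂ → ℂ := w3 (-q) p with hg
  have hopen : IsOpen {ν : ℂ | 0 < ν.re} := isOpen_lt (by fun_prop) (by fun_prop)
  have hgd : DifferentiableOn ℂ g {ν : ℂ | 0 < ν.re} := fun ν hν => by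
    refine DifferentiableAt.differentiableWithinAt ?_
    refine DifferentiableAt.div ?_ (theta_diff _ _ ν hν) (hne ν hν)
    exact (((theta_diff _ _ ν hν).const_mul _).mul (theta_diff _ _ ν hν)).mul
      (thetaQ_diff _ _ ν hν)
  have hit : ∀ n : ℕ, DifferentiableOn ℂ (iteratedDeriv n g) {ν : ℂ | 0 < ν.re} := fun n => by
    induction n with
    | zero => simpa using hgd
    | succ k ih => rw [iteratedDeriv_succ]; exact ih.deriv hopen
  have hd : ∀ (n : ℕ) (ν : ℂ), 0 < ν.re →
      HasDerivAt (iteratedDeriv n g) (iteratedDeriv (n + 1) g ν) ν := fun n ν hν => by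
    rw [iteratedDeriv_succ]
    exact ((hit n).differentiableAt (hopen.mem_nhds hν)).hasDerivAt
  have hp : ∀ (n : ℕ) (c ν : ℂ), HasDerivAt (fun x : ℂ => c * x ^ n) (c * (n * ν ^ (n - 1))) ν :=
    fun n c ν => (hasDerivAt_pow n ν).const_mul c
  have hd0 : ∀ ν : ℂ, 0 < ν.re → HasDerivAt g (iteratedDeriv 1 g ν) ν := fun ν hν => by
    simpa using hd 0 ν hν
  have H0 : ∀ ν : ℂ, 0 < ν.re → w1 p q (1 / ν) = 1 * ν ^ 2 * g ν := fun ν hν => by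
    rw [one_mul]; exact w1_inv p q ν hν
  have H1 : ∀ ν : ℂ, 0 < ν.re → iteratedDeriv 1 (w1 p q) (1 / ν) =
      (-1) * ν ^ 4 * iteratedDeriv 1 g ν + (-2) * ν ^ 3 * g ν := fun ν hν => by
    rw [iteratedDeriv_one, deriv_inv_step _ _ _ H0
      (fun x hx => (hp 2 1 x).mul (hd0 x hx)) ν hν]
    push_cast
    ring
  have H2 : ∀ ν : ℂ, 0 < ν.re → iteratedDeriv 2 (w1 p q) (1 / ν) =
      1 * ν ^ 6 * iteratedDeriv 2 g ν + 6 * ν ^ 5 * iteratedDeriv 1 g ν +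
        6 * ν ^ 4 * g ν := fun ν hν => by
    rw [iteratedDeriv_succ, deriv_inv_step _ _ _ H1
      (fun x hx => ((hp 4 (-1) x).mul (hd 1 x hx)).add ((hp 3 (-2) x).mul (hd0 x hx))) ν hν]
    push_cast
    ring
  have H3 : ∀ ν : ℂ, 0 < ν.re → iteratedDeriv 3 (w1 p q) (1 / ν) =
      (-1) * ν ^ 8 * iteratedDeriv 3 g ν + (-12) * ν ^ 7 * iteratedDeriv 2 g ν +
        (-36) * ν ^ 6 * iteratedDeriv 1 g ν + (-24) * ν ^ 5 * g ν := fun ν hν => by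
    rw [iteratedDeriv_succ, deriv_inv_step _ _ _ H2
      (fun x hx => (((hp 6 1 x).mul (hd 2 x hx)).add ((hp 5 6 x).mul (hd 1 x hx))).add
        ((hp 4 6 x).mul (hd0 x hx))) ν hν]
    push_cast
    ring
  have H4 : iteratedDeriv 4 (w1 p q) (1 / μ) =
      1 * μ ^ 10 * iteratedDeriv 4 g μ + 20 * μ ^ 9 * iteratedDeriv 3 g μ +
        120 * μ ^ 8 * iteratedDeriv 2 g μ + 240 * μ ^ 7 * iteratedDeriv 1 g μ +
        120 * μ ^ 6 * g μ := by
    rw [iteratedDeriv_succ, deriv_inv_step _ _ _ H3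
      (fun x hx => ((((hp 8 (-1) x).mul (hd 3 x hx)).add ((hp 7 (-12) x).mul (hd 2 x hx))).add
        ((hp 6 (-36) x).mul (hd 1 x hx))).add ((hp 5 (-24) x).mul (hd0 x hx))) μ hμ]
    push_cast
    ring
  refine ⟨?_, ?_, ?_, ?_, ?_⟩
  · rw [H0 μ hμ]; ring
  · rw [H1 μ hμ]; ring
  · rw [H2 μ hμ]; ring
  · rw [H3 μ hμ]; ring
  · rw [H4]; ring

end
end
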